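/- Let s ≥ 32 and let (a_{ij}) ∈ ℤ^{3×s} be propitious. Then for every ε > 0 there is a constant C > 0 such that 𝔄(q) ≤ C·q^{ε − 5/3} for all q ∈ ℕ. Consequently the singular series 𝔖 = Σ_{q=1}^∞ 𝔄(q) converges absolutely and satisfies |𝔖 − Σ_{1 ≤ q ≤ X} 𝔄(q)| ≤ C′·X^{−1/2} for all X ≥ 1 and some constant C′; and if in addition the system Σ_{j=1}^s a_{ij}x_j⁴ = 0 (1 ≤ i ≤ 3) has a non-singular solution in ℚ_p^s for every prime p, then 𝔖 > 0. -/

import Mathlib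

open MeasureTheory Filter
open scoped Classical

/-- `e(α) = exp(2πiα)`. -/
noncomputable def eC (α : ℝ) : ℂ := Complex.exp (2 * Real.pi * Complex.I * α)

/-- A `3 × m` integer matrix is highly non-singular if `m ≥ 3` and every three of its
columns are linearly independent. -/
def HighlyNonSingular {m : ℕ} (A : Matrix (Fin 3) (Fin m) ℤ) : Prop :=
  3 ≤ m ∧ ∀ j₁ j₂ j₃ : Fin m, j₁ ≠ j₂ → j₁ ≠ j₃ → j₂ ≠ j₃ →
    LinearIndependent ℚ
      ![(fun i => (A i j₁ : ℚ)), (fun i => (A i j₂ : ℚ)), (fun i => (A i j₃ : ℚ))]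

/-- A `3 × s` integer matrix is propitious if `s ≥ 32` and it has block structure
`(A₀, …, A₇, B)` in which each `Aₗ ∈ ℤ^{3×4}` is highly non-singular. -/
def Propitious {s : ℕ} (A : Matrix (Fin 3) (Fin s) ℤ) : Prop :=
  ∃ _h : 32 ≤ s, ∀ l : Fin 8,
    HighlyNonSingular (Matrix.of fun i (k : Fin 4) =>
      A i ⟨4 * l.val + k.val, by have h1 := l.isLt; have h2 := k.isLt; omega⟩)

/-- `x` is a non-singular solution (over a field `K`) of the system
`∑ⱼ aᵢⱼ xⱼ⁴ = 0 (1 ≤ i ≤ 3)` if it solves the system and the Jacobian matrix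
`(aᵢⱼ xⱼ³)` has rank `3`. -/
def NonsingularSol {s : ℕ} (A : Matrix (Fin 3) (Fin s) ℤ) {K : Type*} [Field K]
    (x : Fin s → K) : Prop :=
  (∀ i, ∑ j, (A i j : K) * x j ^ 4 = 0) ∧
    (Matrix.of fun i j => (A i j : K) * x j ^ 3).rank = 3

/-- The quartic Gauss sum `S(q,a) = ∑_{r=1}^q e(a r⁴ / q)`. -/
noncomputable def Squartic (q : ℕ) (a : ℤ) : ℂ :=
  ∑ r ∈ Finset.Icc 1 q, eC ((a : ℝ) * (r : ℝ) ^ 4 / (q : ℝ))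

/-- `T(q,c) = q^{−s} ∏_{j=1}^s S(q, Λ_j(c))`, where `Λ_j(c) = ∑_{i=1}^3 a_{ij} c_i`. -/
noncomputable def TBW {s : ℕ} (A : Matrix (Fin 3) (Fin s) ℤ) (q : ℕ)
    (c : Fin 3 → ℕ) : ℂ :=
  (q : ℂ) ^ (-(s : ℤ)) * ∏ j, Squartic q (∑ i, A i j * (c i : ℤ))

/-- `𝔄(q) = ∑_{1 ≤ c ≤ q, gcd(q,c₁,c₂,c₃)=1} T(q,c)`. -/
noncomputable def ABW {s : ℕ} (A : Matrix (Fin 3) (Fin s) ℤ) (q : ℕ) : ℂ :=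
  ∑ c ∈ Fintype.piFinset (fun _ : Fin 3 => Finset.Icc 1 q),
    if Nat.gcd q (Nat.gcd (c 0) (Nat.gcd (c 1) (c 2))) = 1 then TBW A q c else 0

/-!
By the Chinese remainder theorem `𝔄` is multiplicative: the number of solutions modulo `q`,
suitably normalised, is the divisor sum of `𝔄`, so `𝔄` is a Dirichlet quotient of multiplicative
functions. Hence it suffices to bound `p^{2h} 𝔄(p^h)`, uniformly in `p` and `h` and by `1` when `p`
is large. Since `S(p^h, a) / p^h` is essentially at most `(p^h / gcd(p^h, a))^{-1/4}`, Hölder's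
inequality over the eight blocks reduces this to a count of primitive vectors `c` according to the
size of `gcd(p^h, Λ_j(c))`; as every three columns of a block are independent, all but two of the
four gcds in a block are bounded by a fixed determinant. This gives `𝔄(q) ≪ q^{-2}`.

The series is therefore the Euler product of its local factors `∑ₕ 𝔄(p^h)`, and each of these is a
limit of solution densities modulo `p^h`, which Hensel's lemma bounds below when there is a
non-singular solution. -/

section ResidueSums

variable {ι M : Type*} [AddCommMonoid M]

lemma sum_range_natCast_zmod (q : ℕ) [NeZero q] (f : ZMod q → M) :
    ∑ r ∈ Finset.range q, f r = ∑ r : ZMod q, f r :=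
  Finset.sum_bij' (fun r _ => (r : ZMod q)) (fun r _ => r.val) (by simp)
    (fun r _ => Finset.mem_range.2 (ZMod.val_lt r))
    (fun r hr => ZMod.val_natCast_of_lt (Finset.mem_range.1 hr)) (by simp) (by simp)

lemma sum_range_mul_natCast_zmod (g q : ℕ) [NeZero q] (f : ZMod q → M) :
    ∑ r ∈ Finset.range (g * q), f r = g • ∑ r : ZMod q, f r := by
  induction g with
  | zero => simp
  | succ g ih =>
    rw [Nat.succ_mul, Finset.sum_range_add, ih, succ_nsmul, ← sum_range_natCast_zmod]
    simp

lemma bijOn_natCast_Icc_zmod (q : ℕ) [NeZero q] :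
    Set.BijOn (fun r : ℕ => (r : ZMod q)) (Finset.Icc 1 q) Set.univ := by
  refine ⟨fun _ _ => trivial, fun a ha b hb hab => ?_, fun y _ => ?_⟩
  · have ha' := Finset.mem_Icc.1 ha
    have hb' := Finset.mem_Icc.1 hb
    have hab' : (a - 1) + 1 ≡ (b - 1) + 1 [MOD q] := by
      rw [Nat.sub_add_cancel ha'.1, Nat.sub_add_cancel hb'.1]
      exact (ZMod.natCast_eq_natCast_iff _ _ _).1 hab
    have := (hab'.add_right_cancel' 1).eq_of_lt_of_lt (by lia) (by lia)
    lia
  · refine ⟨if y = 0 then q else y.val, ?_, ?_⟩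
    · split_ifs with hy
      · simp [NeZero.one_le]
      · simp [(ZMod.val_lt y).le, Nat.one_le_iff_ne_zero, hy]
    · dsimp only
      split_ifs with hy <;> simp [hy]

lemma sum_Icc_natCast_zmod (q : ℕ) [NeZero q] (f : ZMod q → M) :
    ∑ r ∈ Finset.Icc 1 q, f r = ∑ r : ZMod q, f r :=
  have h := bijOn_natCast_Icc_zmod q
  Finset.sum_nbij _ (by simp) h.injOn (by simpa using h.surjOn) (fun _ _ => rfl)

lemma sum_piFinset_Icc_natCast_zmod [Fintype ι] [DecidableEq ι] (q : ℕ) [NeZero q]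
    (f : (ι → ZMod q) → M) :
    ∑ c ∈ Fintype.piFinset (fun _ : ι => Finset.Icc 1 q), f (fun i => c i) = ∑ c, f c := by
  have h := bijOn_natCast_Icc_zmod q
  refine Finset.sum_nbij (fun c i => (c i : ZMod q)) (by simp) (fun a ha b hb hab => ?_)
    (fun y _ => ?_) (fun _ _ => rfl)
  · rw [SetLike.mem_coe, Fintype.mem_piFinset] at ha hb
    exact funext fun i => h.injOn (ha i) (hb i) (congrFun hab i)
  · choose c hc hcy using fun i => h.surjOn (Set.mem_univ (y i))
    exact ⟨c, Finset.mem_coe.2 (Fintype.mem_piFinset.2 hc), funext hcy⟩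

/-- The primitive residue vectors modulo `q`, with representatives in `[1, q]`. -/
def primitiveVectors (ι : Type*) [Fintype ι] [DecidableEq ι] (q : ℕ) : Finset (ι → ℕ) :=
  {c ∈ Fintype.piFinset fun _ => Finset.Icc 1 q | q.gcd (Finset.univ.gcd c) = 1}

lemma gcd_gcd_smul [Fintype ι] (g d : ℕ) (c : ι → ℕ) :
    (g * d).gcd (Finset.univ.gcd (g • c)) = g * d.gcd (Finset.univ.gcd c) := by
  simp only [Pi.smul_def, smul_eq_mul, Finset.gcd_mul_left, normalize_eq, Nat.gcd_mul_left]

lemma smul_mem_piFinset_Icc_iff [Fintype ι] [DecidableEq ι] {g d : ℕ} (hg : 0 < g) {c : ι → ℕ} :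
    g • c ∈ Fintype.piFinset (fun _ : ι => Finset.Icc 1 (g * d)) ↔
      c ∈ Fintype.piFinset fun _ : ι => Finset.Icc 1 d := by
  simp only [Fintype.mem_piFinset, Finset.mem_Icc, Pi.smul_apply, smul_eq_mul,
    Nat.one_le_iff_ne_zero, mul_ne_zero_iff, hg.ne', ne_eq, not_false_eq_true, true_and,
    Nat.mul_le_mul_left_iff hg]

lemma image_smul_primitiveVectors [Fintype ι] [DecidableEq ι] {g d : ℕ} (hg : 0 < g)
    (hd : 0 < d) :
    (primitiveVectors ι d).image (g • ·) =
      {c ∈ Fintype.piFinset fun _ : ι => Finset.Icc 1 (g * d) |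
        (g * d) / (g * d).gcd (Finset.univ.gcd c) = d} := by
  ext c
  rw [Finset.mem_image, Finset.mem_filter]
  constructor
  · rintro ⟨c, hc, rfl⟩
    rw [primitiveVectors, Finset.mem_filter] at hc
    rw [smul_mem_piFinset_Icc_iff hg, gcd_gcd_smul, hc.2, mul_one, Nat.mul_div_cancel_left _ hg]
    exact ⟨hc.1, rfl⟩
  · rintro ⟨hc, hdiv⟩
    have hgcd : (g * d).gcd (Finset.univ.gcd c) = g := by
      have h := Nat.div_mul_cancel (Nat.gcd_dvd_left (g * d) (Finset.univ.gcd c))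
      rw [hdiv, mul_comm] at h
      exact Nat.eq_of_mul_eq_mul_right hd h
    have hdvd (i : ι) : g ∣ c i :=
      (hgcd ▸ Nat.gcd_dvd_right _ _).trans (Finset.gcd_dvd (Finset.mem_univ i))
    choose c' hc' using hdvd
    obtain rfl : c = g • c' := funext hc'
    rw [gcd_gcd_smul] at hgcd
    exact ⟨c', Finset.mem_filter.2 ⟨(smul_mem_piFinset_Icc_iff hg).1 hc,
      Nat.eq_of_mul_eq_mul_left hg (by simpa using hgcd)⟩, rfl⟩

lemma sum_piFinset_Icc_eq_sum_divisors [Fintype ι] [DecidableEq ι] {F : ℕ → (ι → ℕ) → M}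
    (hF : ∀ g d c, 0 < g → 0 < d → F (g * d) (g • c) = F d c) {q : ℕ} (hq : 0 < q) :
    ∑ c ∈ Fintype.piFinset (fun _ : ι => Finset.Icc 1 q), F q c =
      ∑ d ∈ q.divisors, ∑ c ∈ primitiveVectors ι d, F d c := by
  rw [← Finset.sum_fiberwise_of_maps_to (t := q.divisors)
    (g := fun c => q / q.gcd (Finset.univ.gcd c))
    (fun c _ => Nat.mem_divisors.2 ⟨Nat.div_dvd_of_dvd (Nat.gcd_dvd_left _ _), hq.ne'⟩)]
  refine Finset.sum_congr rfl fun d hd => ?_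
  obtain ⟨⟨g, rfl⟩, -⟩ := Nat.mem_divisors.1 hd
  rw [mul_comm d g] at hq ⊢
  have hg : 0 < g := pos_of_mul_pos_left hq (Nat.zero_le _)
  have hd : 0 < d := pos_of_mul_pos_right hq (Nat.zero_le _)
  have hinj : Function.Injective fun c : ι → ℕ => g • c := fun _ _ h =>
    funext fun i => Nat.eq_of_mul_eq_mul_left hg (congrFun h i)
  rw [← image_smul_primitiveVectors hg hd, Finset.sum_image hinj.injOn]
  exact Finset.sum_congr rfl fun c _ => hF g d c hg hd

end ResidueSums

section PowerGaussSums

/-- The power Gauss sum `∑ r mod q, e(a rᵏ / q)`, with the coefficient `a` taken modulo `q`. -/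
noncomputable def powerGaussSum (k : ℕ) {q : ℕ} [NeZero q] (a : ZMod q) : ℂ :=
  ∑ r : ZMod q, ZMod.stdAddChar (a * r ^ k)

lemma Squartic_eq_powerGaussSum (q : ℕ) [NeZero q] (a : ℤ) :
    Squartic q a = powerGaussSum 4 (a : ZMod q) := by
  rw [Squartic, powerGaussSum, ← sum_Icc_natCast_zmod q]
  refine Finset.sum_congr rfl fun r _ => ?_
  have h : (a : ZMod q) * (r : ZMod q) ^ 4 = ((a * (r : ℤ) ^ 4 : ℤ) : ZMod q) := by push_cast; rfl
  rw [h, ZMod.stdAddChar_coe, eC]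
  push_cast
  ring_nf

variable {k : ℕ}

lemma norm_powerGaussSum_le {q : ℕ} [NeZero q] (a : ZMod q) : ‖powerGaussSum k a‖ ≤ q := by
  refine (norm_sum_le _ _).trans_eq ?_
  simp [AddChar.norm_apply, ZMod.card]

lemma stdAddChar_natCast_mul {q g d : ℕ} [NeZero q] [NeZero d] (hq : q = g * d) (j : ℤ) :
    ZMod.stdAddChar ((g * j : ℤ) : ZMod q) = ZMod.stdAddChar (j : ZMod d) := by
  have hg : (g : ℂ) ≠ 0 := by
    rintro hg
    exact NeZero.ne q (by simp [hq, Nat.cast_eq_zero.1 hg])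
  rw [ZMod.stdAddChar_coe, ZMod.stdAddChar_coe, hq]
  push_cast
  congr 1
  rw [mul_left_comm, mul_div_mul_left _ _ hg]

lemma powerGaussSum_natCast_mul {q g d : ℕ} [NeZero q] [NeZero d] (hq : q = g * d) (a : ℤ) :
    powerGaussSum k ((g * a : ℤ) : ZMod q) = g * powerGaussSum k (a : ZMod d) := by
  have h (r : ℕ) : (ZMod.stdAddChar (((g * a : ℤ) : ZMod q) * (r : ZMod q) ^ k) : ℂ) =
      ZMod.stdAddChar ((a : ZMod d) * (r : ZMod d) ^ k) := by
    have := stdAddChar_natCast_mul hq (a * (r : ℤ) ^ k)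
    push_cast at this ⊢
    rw [mul_assoc, this]
  rw [powerGaussSum, powerGaussSum, ← sum_range_natCast_zmod, Finset.sum_congr rfl fun r _ => h r,
    hq, sum_range_mul_natCast_zmod g d fun r => (ZMod.stdAddChar ((a : ZMod d) * r ^ k) : ℂ),
    nsmul_eq_mul]

end PowerGaussSums

section PrimeModulus

variable {k p : ℕ} [Fact p.Prime]

lemma card_pow_eq_le {F : Type*} [Field F] [Fintype F] [DecidableEq F] (hk : 0 < k) (b : F) :
    ({r : F | r ^ k = b} : Finset F).card ≤ k := by
  have h : ({r : F | r ^ k = b} : Finset F) ⊆ (Polynomial.nthRoots k b).toFinset := fun r hr => by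
    simpa [Polynomial.mem_nthRoots hk] using hr
  exact (Finset.card_le_card h).trans
    ((Multiset.toFinset_card_le _).trans (Polynomial.card_nthRoots k b))

lemma sum_norm_powerGaussSum_sq_eq (q : ℕ) [NeZero q] :
    ∑ a : ZMod q, ‖powerGaussSum k a‖ ^ 2 =
      q * ∑ t : ZMod q, (({r : ZMod q | r ^ k = t ^ k} : Finset (ZMod q)).card : ℝ) := by
  have expand (a : ZMod q) : ((‖powerGaussSum k a‖ ^ 2 : ℝ) : ℂ) =
      ∑ t : ZMod q, ∑ r : ZMod q, ZMod.stdAddChar (a * (r ^ k - t ^ k)) := by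
    rw [← Complex.normSq_eq_norm_sq, ← Complex.mul_conj, mul_comm, powerGaussSum, map_sum,
      Finset.sum_mul_sum]
    refine Finset.sum_congr rfl fun t _ => Finset.sum_congr rfl fun r _ => ?_
    rw [← AddChar.map_neg_eq_conj, ← AddChar.map_add_eq_mul]
    ring_nf
  have orthogonality (r t : ZMod q) :
      ∑ a : ZMod q, (ZMod.stdAddChar (a * (r ^ k - t ^ k)) : ℂ) =
        if r ^ k = t ^ k then (q : ℂ) else 0 := by
    rw [AddChar.sum_mulShift _ (ZMod.isPrimitive_stdAddChar q), ZMod.card]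
    simp only [sub_eq_zero, Nat.cast_ite, Nat.cast_zero]
  rw [← Complex.ofReal_inj, Complex.ofReal_sum, Finset.sum_congr rfl fun a _ => expand a,
    Finset.sum_comm, Finset.sum_congr rfl fun t _ => Finset.sum_comm]
  simp only [orthogonality, Finset.sum_ite, Finset.sum_const_zero, add_zero, Finset.sum_const,
    nsmul_eq_mul, mul_comm _ (q : ℂ), ← Finset.mul_sum]
  push_cast
  rfl

lemma sum_norm_powerGaussSum_sq_le (hk : 0 < k) :
    ∑ a : ZMod p, ‖powerGaussSum k a‖ ^ 2 ≤ k * (p : ℝ) ^ 2 := by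
  rw [sum_norm_powerGaussSum_sq_eq]
  calc (p : ℝ) * ∑ t : ZMod p, (({r : ZMod p | r ^ k = t ^ k} : Finset (ZMod p)).card : ℝ)
      ≤ p * ∑ _t : ZMod p, (k : ℝ) := by
        gcongr with t
        exact card_pow_eq_le hk _
    _ = k * (p : ℝ) ^ 2 := by simp [ZMod.card]; ring

lemma powerGaussSum_mul_pow (a : ZMod p) {u : ZMod p} (hu : u ≠ 0) :
    powerGaussSum k (a * u ^ k) = powerGaussSum k a := by
  refine Fintype.sum_equiv (Equiv.mulLeft₀ u hu) _ _ fun r => ?_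
  rw [Equiv.mulLeft₀_apply, mul_pow, mul_assoc]

-- Each of the `p - 1` twists `a uᵏ` contributes `‖S(a)‖²` to the second moment, and a given
-- coefficient arises from at most `k` of them.
lemma sub_one_mul_norm_powerGaussSum_sq_le (hk : 0 < k) {a : ZMod p} (ha : a ≠ 0) :
    ((p : ℝ) - 1) * ‖powerGaussSum k a‖ ^ 2 ≤ k ^ 2 * (p : ℝ) ^ 2 := by
  have hp1 : 1 ≤ p := (Fact.out : p.Prime).one_le
  have fiber_le (b : ZMod p) : ({u : ZMod p | a * u ^ k = b} : Finset (ZMod p)).card ≤ k := by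
    refine le_of_eq_of_le (congrArg _ ?_) (card_pow_eq_le hk (a⁻¹ * b))
    ext u
    simp [eq_inv_mul_iff_mul_eq₀ ha]
  calc ((p : ℝ) - 1) * ‖powerGaussSum k a‖ ^ 2
      = ∑ u ∈ Finset.univ.erase (0 : ZMod p), ‖powerGaussSum k (a * u ^ k)‖ ^ 2 := by
        rw [Finset.sum_congr rfl fun u hu => by
          rw [powerGaussSum_mul_pow a (Finset.ne_of_mem_erase hu)]]
        simp [Finset.card_erase_of_mem, ZMod.card, Nat.cast_sub hp1]
    _ ≤ ∑ u : ZMod p, ‖powerGaussSum k (a * u ^ k)‖ ^ 2 :=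
        Finset.sum_le_sum_of_subset_of_nonneg (Finset.erase_subset _ _) fun _ _ _ => by positivity
    _ = ∑ b : ZMod p,
          ({u : ZMod p | a * u ^ k = b} : Finset (ZMod p)).card * ‖powerGaussSum k b‖ ^ 2 := by
        rw [← Finset.sum_fiberwise Finset.univ fun u => a * u ^ k]
        refine Finset.sum_congr rfl fun b _ => ?_
        rw [Finset.sum_congr rfl fun u hu => by rw [(Finset.mem_filter.1 hu).2], Finset.sum_const,
          nsmul_eq_mul]
    _ ≤ ∑ b : ZMod p, k * ‖powerGaussSum k b‖ ^ 2 := by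
        gcongr with b
        exact fiber_le b
    _ ≤ k ^ 2 * (p : ℝ) ^ 2 := by
        rw [← Finset.mul_sum, sq (k : ℝ), mul_assoc]
        gcongr
        exact sum_norm_powerGaussSum_sq_le hk

lemma norm_powerGaussSum_sq_le (hk : 0 < k) {a : ZMod p} (ha : a ≠ 0) :
    ‖powerGaussSum k a‖ ^ 2 ≤ 2 * k ^ 2 * p := by
  have hp : (2 : ℝ) ≤ p := mod_cast (Fact.out : p.Prime).two_le
  have h := sub_one_mul_norm_powerGaussSum_sq_le hk ha
  refine le_of_mul_le_mul_left (h.trans ?_) (by linarith : 0 < (p : ℝ) - 1)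
  nlinarith [mul_nonneg (sq_nonneg (k : ℝ)) (mul_nonneg (by linarith : (0 : ℝ) ≤ p)
    (sub_nonneg.2 hp))]

lemma norm_powerGaussSum_pow_le_of_le (hk : 3 ≤ k) (hp : (2 * k ^ 2) ^ k ≤ p) {a : ZMod p}
    (ha : a ≠ 0) : ‖powerGaussSum k a‖ ^ k ≤ (p : ℝ) ^ (k - 1) := by
  have hp' : (2 * (k : ℝ) ^ 2) ^ k ≤ p := mod_cast hp
  have hp1 : (1 : ℝ) ≤ p := mod_cast (Fact.out : p.Prime).one_le
  refine le_of_sq_le_sq ?_ (by positivity)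
  calc (‖powerGaussSum k a‖ ^ k) ^ 2
      = (‖powerGaussSum k a‖ ^ 2) ^ k := by rw [← pow_mul, ← pow_mul, mul_comm]
    _ ≤ (2 * (k : ℝ) ^ 2 * p) ^ k := by
        gcongr
        exact norm_powerGaussSum_sq_le (by lia) ha
    _ ≤ p * (p : ℝ) ^ k := by
        rw [mul_pow]
        gcongr
    _ ≤ ((p : ℝ) ^ (k - 1)) ^ 2 := by
        rw [← pow_succ', ← pow_mul]
        exact pow_le_pow_right₀ hp1 (by lia)

end PrimeModulus

section PrimePowerModulus

variable {k p h τ u : ℕ} [Fact p.Prime]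

lemma add_mul_pow_of_sq_eq_zero {R : Type*} [CommRing R] {y : R} (hy : y ^ 2 = 0) (x t : R)
    (k : ℕ) : (x + t * y) ^ k = x ^ k + t * (k * y * x ^ (k - 1)) := by
  have h := Polynomial.aeval_add_of_sq_eq_zero (R := R) (Polynomial.X ^ k) x (t * y)
    (by rw [mul_pow, hy, mul_zero])
  simp only [map_pow, Polynomial.aeval_X, Polynomial.derivative_X_pow, map_mul, map_natCast] at h
  rw [h]
  ring

lemma sum_range_filter_dvd {M : Type*} [AddCommMonoid M] {p m n : ℕ} (hp : 0 < p)
    (hm : m = p * n) (f : ℕ → M) :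
    ∑ r ∈ Finset.range m with p ∣ r, f r = ∑ r ∈ Finset.range n, f (p * r) := by
  subst hm
  symm
  refine Finset.sum_nbij (p * ·) (by simp [hp]) (fun _ _ _ _ h => Nat.eq_of_mul_eq_mul_left hp h)
    (fun r hr => ?_) (fun _ _ => rfl)
  simp only [Finset.coe_filter, Finset.mem_range, Set.mem_ofPred_eq] at hr
  obtain ⟨hr, m, rfl⟩ := hr
  exact ⟨m, by simpa using lt_of_mul_lt_mul_left hr (Nat.zero_le p), rfl⟩

lemma sum_range_stdAddChar_mul {q : ℕ} [NeZero q] {n : ℕ} {z : ZMod q} (hz : (n : ZMod q) * z = 0) :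
    ∑ t ∈ Finset.range n, (ZMod.stdAddChar ((t : ZMod q) * z) : ℂ) =
      if z = 0 then (n : ℂ) else 0 := by
  simp only [← nsmul_eq_mul, AddChar.map_nsmul_eq_pow] at hz ⊢
  split_ifs with h0
  · simp [h0]
  · have hne : (ZMod.stdAddChar z : ℂ) ≠ 1 := fun h =>
      h0 (ZMod.injective_stdAddChar (h.trans (AddChar.map_zero_eq_one _).symm))
    rw [geom_sum_eq hne, ← AddChar.map_nsmul_eq_pow, hz, AddChar.map_zero_eq_one, sub_self,
      zero_div]

lemma pow_mul_intCast_eq_zero_iff (x : ℤ) :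
    (p : ZMod (p ^ (h + 1))) ^ h * x = 0 ↔ (p : ℤ) ∣ x := by
  have hp0 : (p : ℤ) ≠ 0 := mod_cast (Fact.out : p.Prime).ne_zero
  have hcast : (p : ZMod (p ^ (h + 1))) ^ h * x = ((p ^ h * x : ℤ) : ZMod (p ^ (h + 1))) := by
    push_cast; rfl
  rw [hcast, ZMod.intCast_zmod_eq_zero_iff_dvd, Nat.cast_pow, pow_succ]
  exact mul_dvd_mul_iff_left (pow_ne_zero h hp0)

-- Translating `r` by multiples of `y` multiplies the summand by a character of order dividing `n`.
lemma powerGaussSum_eq_sum_of_sq_eq_zero {q : ℕ} [NeZero q] {n : ℕ} (hn : n ≠ 0) {y : ZMod q}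
    (hy : y ^ 2 = 0) (hny : n * (k * y) = 0) (a : ZMod q) :
    powerGaussSum k a = ∑ r with a * (k * y * r ^ (k - 1)) = 0, ZMod.stdAddChar (a * r ^ k) := by
  let ψ : AddChar (ZMod q) ℂ := ZMod.stdAddChar
  let z (r : ZMod q) : ZMod q := a * (k * y * r ^ (k - 1))
  have n_mul_z (r : ZMod q) : (n : ZMod q) * z r = 0 := by
    linear_combination a * r ^ (k - 1) * hny
  have translate (t : ℕ) : powerGaussSum k a = ∑ r, ψ (a * r ^ k) * ψ (t * z r) := by
    rw [powerGaussSum, ← Equiv.sum_comp (Equiv.addRight (t * y))]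
    refine Finset.sum_congr rfl fun r _ => ?_
    rw [← AddChar.map_add_eq_mul, Equiv.coe_addRight, add_mul_pow_of_sq_eq_zero hy]
    congr 1
    ring
  refine mul_left_cancel₀ (Nat.cast_ne_zero.2 hn : (n : ℂ) ≠ 0) ?_
  calc (n : ℂ) * powerGaussSum k a
      = ∑ t ∈ Finset.range n, ∑ r, ψ (a * r ^ k) * ψ (t * z r) := by
        simp only [← translate, Finset.sum_const, Finset.card_range, nsmul_eq_mul]
    _ = ∑ r, ψ (a * r ^ k) * if z r = 0 then (n : ℂ) else 0 := by
        rw [Finset.sum_comm]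
        refine Finset.sum_congr rfl fun r _ => ?_
        rw [← Finset.mul_sum, sum_range_stdAddChar_mul (n_mul_z r)]
    _ = n * ∑ r with z r = 0, ψ (a * r ^ k) := by
        rw [Finset.sum_filter, Finset.mul_sum]
        exact Finset.sum_congr rfl fun r _ => by split_ifs <;> ring

lemma mul_pow_sub_one_eq_zero_iff (hk : 2 ≤ k) (hku : k = p ^ τ * u) (hu : ¬ p ∣ u)
    (hτ : τ ≤ h) {a : ℤ} (ha : ¬ (p : ℤ) ∣ a) (r : ℕ) :
    (a : ZMod (p ^ (h + 1))) * (k * (p : ZMod (p ^ (h + 1))) ^ (h - τ) * r ^ (k - 1)) = 0 ↔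
      p ∣ r := by
  have hpz : Prime (p : ℤ) := Nat.prime_iff_prime_int.1 Fact.out
  have hk_mul : (k : ZMod (p ^ (h + 1))) * (p : ZMod (p ^ (h + 1))) ^ (h - τ) =
      (p : ZMod (p ^ (h + 1))) ^ h * u := by
    have : k * p ^ (h - τ) = p ^ h * u := by
      rw [hku, mul_right_comm, ← pow_add, Nat.add_sub_of_le hτ]
    exact_mod_cast congrArg (Nat.cast : ℕ → ZMod (p ^ (h + 1))) this
  have hfactor : (a : ZMod (p ^ (h + 1))) *
      (k * (p : ZMod (p ^ (h + 1))) ^ (h - τ) * r ^ (k - 1)) =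
        (p : ZMod (p ^ (h + 1))) ^ h * (a * u * r ^ (k - 1) : ℤ) := by
    rw [hk_mul]
    push_cast
    ring
  rw [hfactor, pow_mul_intCast_eq_zero_iff, hpz.dvd_mul, hpz.dvd_mul,
    hpz.dvd_pow_iff_dvd (by lia), Int.natCast_dvd_natCast, Int.natCast_dvd_natCast]
  tauto

lemma powerGaussSum_prime_pow_eq_sum_range (hk : 2 ≤ k) (hku : k = p ^ τ * u) (hu : ¬ p ∣ u)
    (hh : 2 * τ + 1 ≤ h) {a : ℤ} (ha : ¬ (p : ℤ) ∣ a) :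
    powerGaussSum k (a : ZMod (p ^ (h + 1))) =
      ∑ r ∈ Finset.range (p ^ h),
        ZMod.stdAddChar ((a : ZMod (p ^ (h + 1))) * ((p * r : ℕ) : ZMod (p ^ (h + 1))) ^ k) := by
  have hp : p.Prime := Fact.out
  have pow_zero {n : ℕ} (hn : h + 1 ≤ n) : (p : ZMod (p ^ (h + 1))) ^ n = 0 :=
    pow_eq_zero_of_le hn (by rw [← Nat.cast_pow, ZMod.natCast_self])
  have y_sq : ((p : ZMod (p ^ (h + 1))) ^ (h - τ)) ^ 2 = 0 := by
    rw [← pow_mul]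
    exact pow_zero (by lia)
  have p_mul_y : (p : ZMod (p ^ (h + 1))) * (k * (p : ZMod (p ^ (h + 1))) ^ (h - τ)) = 0 := by
    have hdvd : p ^ (h + 1) ∣ p * (k * p ^ (h - τ)) := by
      refine ⟨u, ?_⟩
      rw [hku, mul_right_comm, ← pow_add, Nat.add_sub_of_le (by lia), pow_succ', mul_assoc]
    exact_mod_cast (ZMod.natCast_eq_zero_iff _ _).2 hdvd
  rw [powerGaussSum_eq_sum_of_sq_eq_zero hp.ne_zero y_sq p_mul_y, Finset.sum_filter,
    ← sum_range_natCast_zmod]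
  simp only [mul_pow_sub_one_eq_zero_iff hk hku hu (show τ ≤ h by lia) ha]
  rw [← Finset.sum_filter, sum_range_filter_dvd hp.pos (pow_succ' p h)]

lemma norm_powerGaussSum_prime_pow_succ_le (hk : 2 ≤ k) (hku : k = p ^ τ * u) (hu : ¬ p ∣ u)
    (hh : 2 * τ + 1 ≤ h) {a : ℤ} (ha : ¬ (p : ℤ) ∣ a) :
    ‖powerGaussSum k (a : ZMod (p ^ (h + 1)))‖ ≤ (p : ℝ) ^ h := by
  rw [powerGaussSum_prime_pow_eq_sum_range hk hku hu hh ha]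
  refine (norm_sum_le _ _).trans_eq ?_
  simp [AddChar.norm_apply]

lemma powerGaussSum_prime_pow_add (hk : 2 ≤ k) (hku : k = p ^ τ * u) (hu : ¬ p ∣ u) {l : ℕ}
    (hl : 2 * τ + 2 ≤ l + k) {a : ℤ} (ha : ¬ (p : ℤ) ∣ a) :
    powerGaussSum k (a : ZMod (p ^ (l + k))) =
      (p : ℂ) ^ (k - 1) * powerGaussSum k (a : ZMod (p ^ l)) := by
  obtain ⟨h, hh⟩ : ∃ h, l + k = h + 1 := ⟨l + k - 1, by lia⟩
  have summand (r : ℕ) :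
      (ZMod.stdAddChar ((a : ZMod (p ^ (h + 1))) * ((p * r : ℕ) : ZMod (p ^ (h + 1))) ^ k) : ℂ) =
        ZMod.stdAddChar ((a : ZMod (p ^ l)) * (r : ZMod (p ^ l)) ^ k) := by
    have := stdAddChar_natCast_mul (show p ^ (h + 1) = p ^ k * p ^ l by rw [← hh]; ring)
      (a * (r : ℤ) ^ k)
    push_cast at this ⊢
    rw [← this]
    ring_nf
  rw [hh, powerGaussSum_prime_pow_eq_sum_range hk hku hu (by lia) ha,
    Finset.sum_congr rfl fun r _ => summand r, show p ^ h = p ^ (k - 1) * p ^ l by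
      rw [← pow_add]; congr 1; lia,
    sum_range_mul_natCast_zmod _ (p ^ l) fun r =>
      (ZMod.stdAddChar ((a : ZMod (p ^ l)) * r ^ k) : ℂ),
    nsmul_eq_mul, powerGaussSum]
  push_cast
  rfl

end PrimePowerModulus

section GaussSumBound

variable {k p : ℕ} [Fact p.Prime]

lemma norm_powerGaussSum_div_le_one {q : ℕ} [NeZero q] (a : ZMod q) :
    ‖powerGaussSum k a‖ / q ≤ 1 :=
  div_le_one_of_le₀ (norm_powerGaussSum_le a) q.cast_nonneg

lemma norm_powerGaussSum_prime_pow_le_of_base {τ u H : ℕ} {K : ℝ} (hk : 2 ≤ k)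
    (hku : k = p ^ τ * u) (hu : ¬ p ∣ u) (hkH : k ≤ H) (hτH : 2 * τ + 2 ≤ H) {a : ℤ}
    (ha : ¬ (p : ℤ) ∣ a)
    (base : ∀ h < H, (‖powerGaussSum k (a : ZMod (p ^ h))‖ / (p : ℝ) ^ h) ^ k ≤ K / (p : ℝ) ^ h)
    (h : ℕ) : (‖powerGaussSum k (a : ZMod (p ^ h))‖ / (p : ℝ) ^ h) ^ k ≤ K / (p : ℝ) ^ h := by
  have hp0 : (p : ℝ) ≠ 0 := Nat.cast_ne_zero.2 (NeZero.ne p)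
  induction h using Nat.strong_induction_on with
  | _ h ih =>
    rcases lt_or_ge h H with hlt | hge
    · exact base h hlt
    · obtain ⟨l, rfl⟩ := Nat.exists_eq_add_of_le' (hkH.trans hge)
      have hdiv : ‖powerGaussSum k (a : ZMod (p ^ (l + k)))‖ / (p : ℝ) ^ (l + k) =
          ‖powerGaussSum k (a : ZMod (p ^ l))‖ / (p : ℝ) ^ l / p := by
        rw [powerGaussSum_prime_pow_add hk hku hu (hτH.trans hge) ha, norm_mul, norm_pow,
          Complex.norm_natCast, pow_add, ← mul_pow_sub_one (show k ≠ 0 by lia) (p : ℝ)]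
        field_simp
      rw [hdiv, div_pow, pow_add, ← div_div]
      gcongr
      exact ih l (by lia)

lemma norm_powerGaussSum_prime_pow_le_of_large (hk : 3 ≤ k) (hp : (2 * k ^ 2) ^ k ≤ p) {a : ℤ}
    (ha : ¬ (p : ℤ) ∣ a) (h : ℕ) :
    (‖powerGaussSum k (a : ZMod (p ^ h))‖ / (p : ℝ) ^ h) ^ k ≤ 1 / (p : ℝ) ^ h := by
  have hp0 : (0 : ℝ) < p := Nat.cast_pos.2 (NeZero.pos p)
  have hp1 : (1 : ℝ) ≤ p := mod_cast (Fact.out : p.Prime).one_le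
  have hkp : k < p := by
    have : 2 * k ^ 2 ≤ (2 * k ^ 2) ^ k := Nat.le_self_pow (by lia) _
    nlinarith
  have hpk : ¬ p ∣ k := fun hdvd => absurd (Nat.le_of_dvd (by lia) hdvd) (by lia)
  refine norm_powerGaussSum_prime_pow_le_of_base (H := k) (τ := 0) (by lia) (by simp) hpk le_rfl
    (by lia) ha (fun h hh => ?_) h
  obtain rfl | rfl | ⟨h, rfl⟩ : h = 0 ∨ h = 1 ∨ ∃ j, h = j + 1 + 1 := by
    rcases h with _ | _ | h <;> simp
  · have := norm_powerGaussSum_div_le_one (k := k) (a : ZMod (p ^ 0))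
    simpa using pow_le_one₀ (by positivity) this
  · have ha0 : (a : ZMod (p ^ 1)) ≠ 0 := by
      rwa [Ne, ZMod.intCast_zmod_eq_zero_iff_dvd, pow_one]
    have : Fact (p ^ 1).Prime := ⟨by rw [pow_one]; exact Fact.out⟩
    have := norm_powerGaussSum_pow_le_of_le hk (by rwa [pow_one]) ha0
    rw [pow_one (p : ℝ), div_pow, div_le_div_iff₀ (by positivity) hp0, one_mul,
      ← pow_sub_one_mul (show k ≠ 0 by lia) (p : ℝ)]
    gcongr
    simpa using this
  · have := norm_powerGaussSum_prime_pow_succ_le (k := k) (h := h + 1) (τ := 0) (by lia) (by simp)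
      hpk (by lia) ha
    calc (‖powerGaussSum k (a : ZMod (p ^ (h + 1 + 1)))‖ / (p : ℝ) ^ (h + 1 + 1)) ^ k
        ≤ ((p : ℝ) ^ (h + 1) / (p : ℝ) ^ (h + 1 + 1)) ^ k := by gcongr
      _ = 1 / (p : ℝ) ^ k := by
          rw [pow_succ _ (h + 1), div_mul_cancel_left₀ (by positivity), inv_pow, one_div]
      _ ≤ 1 / (p : ℝ) ^ (h + 1 + 1) := by gcongr

lemma norm_powerGaussSum_prime_pow_le (hk : 2 ≤ k) {a : ℤ} (ha : ¬ (p : ℤ) ∣ a) (h : ℕ) :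
    (‖powerGaussSum k (a : ZMod (p ^ h))‖ / (p : ℝ) ^ h) ^ k ≤
      (p : ℝ) ^ (2 * k) / (p : ℝ) ^ h := by
  have hp : p.Prime := Fact.out
  have hp1 : (1 : ℝ) ≤ p := mod_cast hp.one_le
  obtain ⟨τ, u, hu, hku⟩ := Nat.exists_eq_pow_mul_and_not_dvd (show k ≠ 0 by lia) p hp.ne_one
  have hτk : τ < k := by
    have hu0 : 0 < u := Nat.pos_of_ne_zero (by rintro rfl; simp at hu)
    exact (Nat.lt_pow_self hp.one_lt).trans_le (hku ▸ Nat.le_mul_of_pos_right _ hu0)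
  refine norm_powerGaussSum_prime_pow_le_of_base (H := 2 * k) hk hku hu (by lia) (by lia) ha
    (fun h hh => ?_) h
  have := norm_powerGaussSum_div_le_one (k := k) (a : ZMod (p ^ h))
  rw [Nat.cast_pow] at this
  refine (pow_le_one₀ (by positivity) this).trans ?_
  rw [one_le_div (by positivity)]
  exact pow_le_pow_right₀ hp1 hh.le

lemma norm_powerGaussSum_le_gcd_of_coprime {K : ℝ} (hK : 1 ≤ K)
    (hcoprime : ∀ a : ℤ, ¬ (p : ℤ) ∣ a → ∀ h : ℕ,
      (‖powerGaussSum k (a : ZMod (p ^ h))‖ / (p : ℝ) ^ h) ^ k ≤ K / (p : ℝ) ^ h)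
    {h : ℕ} (a : ZMod (p ^ h)) :
    (‖powerGaussSum k a‖ / (p : ℝ) ^ h) ^ k ≤ K * ((p ^ h).gcd a.val / (p : ℝ) ^ h) := by
  have hp : p.Prime := Fact.out
  have hp0 : (p : ℝ) ≠ 0 := Nat.cast_ne_zero.2 (NeZero.ne p)
  rcases eq_or_ne a 0 with rfl | ha
  · have := norm_powerGaussSum_div_le_one (k := k) (0 : ZMod (p ^ h))
    rw [Nat.cast_pow] at this
    simpa [hp0] using (pow_le_one₀ (by positivity) this).trans hK
  obtain ⟨j, b, hb, hab⟩ := Nat.exists_eq_pow_mul_and_not_dvd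
    (show a.val ≠ 0 by rwa [Ne, ZMod.val_eq_zero]) p hp.ne_one
  have hjh : j < h := by
    have hb0 : 0 < b := Nat.pos_of_ne_zero (by rintro rfl; simp at hb)
    have : p ^ j < p ^ h := (Nat.le_mul_of_pos_right _ hb0).trans_lt (hab ▸ ZMod.val_lt a)
    exact (Nat.pow_lt_pow_iff_right hp.one_lt).1 this
  obtain ⟨l, rfl⟩ := Nat.exists_eq_add_of_le hjh.le
  have hgcd : (p ^ (j + l)).gcd a.val = p ^ j := by
    rw [hab, pow_add, Nat.gcd_mul_left, ((hp.coprime_iff_not_dvd.2 hb).pow_left l).gcd_eq_one,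
      mul_one]
  have hscale : powerGaussSum k a = (p : ℂ) ^ j * powerGaussSum k ((b : ℤ) : ZMod (p ^ l)) := by
    rw [← ZMod.natCast_zmod_val a, hab]
    have := powerGaussSum_natCast_mul (k := k) (pow_add p j l) b
    push_cast at this ⊢
    exact this
  have := hcoprime b (by rwa [Int.natCast_dvd_natCast]) l
  rw [hgcd, hscale, norm_mul, norm_pow, Complex.norm_natCast, pow_add, Nat.cast_pow,
    mul_div_mul_left _ _ (pow_ne_zero j hp0)]
  refine this.trans_eq ?_
  field_simp

theorem exists_norm_powerGaussSum_le (hk : 3 ≤ k) :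
    ∃ (P : ℕ) (K : ℝ), 1 ≤ K ∧ ∀ p [Fact p.Prime] (h : ℕ) (a : ZMod (p ^ h)),
      (‖powerGaussSum k a‖ / (p : ℝ) ^ h) ^ k ≤
        (if p < P then K else 1) * ((p ^ h).gcd a.val / (p : ℝ) ^ h) := by
  let P := (2 * k ^ 2) ^ k
  have hP : (1 : ℝ) ≤ P := by
    have : 0 < P := by positivity
    exact_mod_cast this
  refine ⟨P, (P : ℝ) ^ (2 * k), one_le_pow₀ hP, fun p _ h a => ?_⟩
  split_ifs with hpP
  · refine norm_powerGaussSum_le_gcd_of_coprime (one_le_pow₀ hP) (fun b hb l => ?_) a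
    refine (norm_powerGaussSum_prime_pow_le (by lia) hb l).trans ?_
    gcongr
  · exact norm_powerGaussSum_le_gcd_of_coprime le_rfl
      (fun b hb l => norm_powerGaussSum_prime_pow_le_of_large hk (by lia) hb l) a

end GaussSumBound

section GcdWeights

/-- The weight `(gcd(q, y) / q)²` of a residue class, the size of the `2k`-th power of a normalized
`k`-th power Gauss sum with coefficient `y`. -/
noncomputable def gcdWeight {q : ℕ} (y : ZMod q) : ℝ := (q.gcd y.val / q) ^ 2

lemma gcdWeight_nonneg {q : ℕ} (y : ZMod q) : 0 ≤ gcdWeight y := sq_nonneg _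

lemma sum_gcd_sq_le (q : ℕ) :
    ∑ r ∈ Finset.range q, q.gcd r ^ 2 ≤ q * ∑ d ∈ q.divisors, d := by
  rcases Nat.eq_zero_or_pos q with rfl | hq
  · simp
  calc ∑ r ∈ Finset.range q, q.gcd r ^ 2
      = ∑ d ∈ q.divisors, (q / d).totient * d ^ 2 := by
        rw [← Finset.sum_fiberwise_of_maps_to (t := q.divisors) (g := q.gcd)
          fun r _ => Nat.mem_divisors.2 ⟨Nat.gcd_dvd_left q r, hq.ne'⟩]
        refine Finset.sum_congr rfl fun d hd => ?_
        rw [Finset.sum_congr rfl fun r hr => by rw [(Finset.mem_filter.1 hr).2],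
          Finset.sum_const, Nat.totient_div_of_dvd (Nat.dvd_of_mem_divisors hd), smul_eq_mul]
    _ ≤ ∑ d ∈ q.divisors, q / d * d ^ 2 := by
        gcongr
        exact Nat.totient_le _
    _ = q * ∑ d ∈ q.divisors, d := by
        rw [Finset.mul_sum]
        refine Finset.sum_congr rfl fun d hd => ?_
        rw [sq, ← mul_assoc, Nat.div_mul_cancel (Nat.dvd_of_mem_divisors hd)]

lemma sum_gcdWeight_le_two {p : ℕ} [Fact p.Prime] (h : ℕ) :
    ∑ y : ZMod (p ^ h), gcdWeight y ≤ 2 := by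
  have hp : p.Prime := Fact.out
  have sum_divisors_le : ∑ d ∈ (p ^ h).divisors, d ≤ 2 * p ^ h := by
    rw [Nat.sum_divisors_prime_pow hp, Finset.sum_range_succ, two_mul]
    gcongr
    exact (Nat.geomSum_lt hp.two_le (by simp)).le
  have hsum : ∑ r ∈ Finset.range (p ^ h), (p ^ h).gcd r ^ 2 ≤ 2 * (p ^ h) ^ 2 :=
    (sum_gcd_sq_le _).trans (by nlinarith [Nat.zero_le (p ^ h)])
  have hq : (0 : ℝ) < ((p ^ h : ℕ) : ℝ) ^ 2 := by
    have : 0 < p ^ h := NeZero.pos _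
    positivity
  rw [← sum_range_natCast_zmod]
  simp only [gcdWeight, div_pow, ← Finset.sum_div]
  rw [div_le_iff₀ hq, Finset.sum_congr rfl fun r hr => by
    rw [ZMod.val_natCast_of_lt (Finset.mem_range.1 hr)]]
  exact_mod_cast hsum

end GcdWeights

section LinearForms

open scoped Matrix

variable {ι : Type*} [Fintype ι] [DecidableEq ι]

lemma dvd_det_mul_of_dvd_vecMul {R : Type*} [CommRing R] {B : Matrix ι ι R} {c : ι → R} {g : R}
    (h : ∀ j, g ∣ (c ᵥ* B) j) (i : ι) : g ∣ B.det * c i := by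
  have hadj : B.det * c i = ((c ᵥ* B) ᵥ* B.adjugate) i := by
    rw [Matrix.vecMul_vecMul, Matrix.mul_adjugate, Matrix.vecMul_smul, Matrix.vecMul_one,
      Pi.smul_apply, smul_eq_mul]
  rw [hadj]
  exact Finset.dvd_sum fun j _ => dvd_mul_of_dvd_left (h j) _

variable {q : ℕ} [NeZero q]

lemma natCast_dvd_zmod_iff {d : ℕ} (hd : d ∣ q) (y : ZMod q) : (d : ZMod q) ∣ y ↔ d ∣ y.val := by
  refine ⟨fun ⟨z, hz⟩ => ?_, fun ⟨m, hm⟩ => ⟨m, ?_⟩⟩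
  · rw [hz, ← ZMod.natCast_zmod_val z, ← Nat.cast_mul, ZMod.val_natCast, Nat.dvd_mod_iff hd]
    exact dvd_mul_right d _
  · rw [← Nat.cast_mul, ← hm, ZMod.natCast_zmod_val]

lemma card_mul_eq_zero_le (D : ZMod q) :
    ({x | D * x = 0} : Finset (ZMod q)).card ≤ q.gcd D.val := by
  refine le_trans (Finset.card_le_card fun x hx => ?_)
    (IsAddCyclic.card_nsmul_eq_zero_le (α := ZMod q) (Nat.gcd_pos_of_pos_left _ (NeZero.pos q)))
  have hD : D.val • x = 0 := by simpa [nsmul_eq_mul] using hx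
  have hq : q • x = 0 := by simp
  rw [Finset.mem_filter, ← addOrderOf_dvd_iff_nsmul_eq_zero]
  exact ⟨Finset.mem_univ x, Nat.dvd_gcd (addOrderOf_dvd_of_nsmul_eq_zero hq)
    (addOrderOf_dvd_of_nsmul_eq_zero hD)⟩

lemma card_vecMul_eq_le {B : Matrix ι ι (ZMod q)} {D : ZMod q} (hD : B.det ∣ D)
    (y : ι → ZMod q) :
    ({c | c ᵥ* B = y} : Finset (ι → ZMod q)).card ≤ q.gcd D.val ^ Fintype.card ι := by
  rcases Finset.eq_empty_or_nonempty ({c | c ᵥ* B = y} : Finset (ι → ZMod q)) with h | ⟨c₀, hc₀⟩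
  · simp [h]
  refine (Finset.card_le_card_of_injOn (t := Fintype.piFinset fun _ => {x | D * x = 0})
    (· - c₀) (fun c hc => ?_) fun _ _ _ _ h => sub_left_injective h).trans ?_
  · simp only [Finset.coe_filter, Finset.mem_filter, Finset.mem_univ, true_and,
      Set.mem_ofPred_eq] at hc hc₀
    have hzero (j : ι) : 0 ∣ ((c - c₀) ᵥ* B) j := by
      rw [Matrix.sub_vecMul, hc, hc₀, sub_self, Pi.zero_apply]
    simp only [Finset.mem_coe, Fintype.mem_piFinset, Finset.mem_filter, Finset.mem_univ, true_and]
    intro i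
    obtain ⟨m, rfl⟩ := hD
    rw [mul_right_comm, zero_dvd_iff.1 (dvd_det_mul_of_dvd_vecMul hzero i), zero_mul]
  · rw [Fintype.card_piFinset, Finset.prod_const, Finset.card_univ]
    gcongr
    exact card_mul_eq_zero_le D

lemma sum_vecMul_le {B : Matrix ι ι (ZMod q)} {D : ZMod q} (hD : B.det ∣ D)
    {F : (ι → ZMod q) → ℝ} (hF : ∀ y, 0 ≤ F y) :
    ∑ c, F (c ᵥ* B) ≤ (q.gcd D.val : ℝ) ^ Fintype.card ι * ∑ y, F y := by
  rw [← Finset.sum_fiberwise Finset.univ fun c : ι → ZMod q => c ᵥ* B, Finset.mul_sum]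
  refine Finset.sum_le_sum fun y _ => ?_
  rw [Finset.sum_congr rfl fun c hc => by rw [(Finset.mem_filter.1 hc).2], Finset.sum_const,
    nsmul_eq_mul]
  gcongr
  · exact hF y
  · exact_mod_cast card_vecMul_eq_le hD y

lemma sum_prod_erase_gcdWeight (i₀ : ι) :
    ∑ y : ι → ZMod q, ∏ i ∈ Finset.univ.erase i₀, gcdWeight (y i) =
      q * (∑ x : ZMod q, gcdWeight x) ^ (Fintype.card ι - 1) := by
  let F (i : ι) (x : ZMod q) : ℝ := if i = i₀ then 1 else gcdWeight x
  have prod_F (y : ι → ZMod q) :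
      ∏ i, F i (y i) = ∏ i ∈ Finset.univ.erase i₀, gcdWeight (y i) := by
    rw [← Finset.mul_prod_erase Finset.univ _ (Finset.mem_univ i₀)]
    simp only [F, if_pos, one_mul]
    exact Finset.prod_congr rfl fun i hi => if_neg (Finset.ne_of_mem_erase hi)
  simp only [← prod_F]
  rw [← Fintype.piFinset_univ, ← Finset.prod_univ_sum,
    ← Finset.mul_prod_erase _ _ (Finset.mem_univ i₀), Finset.prod_congr rfl fun i hi =>
      Finset.sum_congr rfl fun x _ => if_neg (Finset.ne_of_mem_erase hi)]
  simp [F, ZMod.card]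

end LinearForms

section PrimitiveForms

open scoped Matrix

variable {ι κ : Type*} [Fintype ι] [Fintype κ]

lemma exists_embedding_forall_mem_exists_ne (hικ : Fintype.card ι ≤ Fintype.card κ) (i₀ : ι)
    {t : Finset κ} (ht : t.card < Fintype.card ι) :
    ∃ e : ι ↪ κ, ∀ k ∈ t, ∃ i ≠ i₀, e i = k := by
  obtain ⟨s, hts, hs⟩ := Finset.exists_superset_card_eq ht.le hικ
  obtain ⟨k₀, hk₀s, hk₀t⟩ := Finset.exists_mem_notMem_of_card_lt_card (hs ▸ ht)
  obtain ⟨f⟩ : Nonempty (ι ≃ s) := Fintype.card_eq.1 (by simp [hs])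
  let g : ι ≃ s := (Equiv.swap i₀ (f.symm ⟨k₀, hk₀s⟩)).trans f
  refine ⟨g.toEmbedding.trans (Function.Embedding.subtype _), fun k hk => ?_⟩
  refine ⟨g.symm ⟨k, hts hk⟩, fun h => hk₀t ?_, by simp⟩
  have hg : g i₀ = ⟨k₀, hk₀s⟩ := by simp [g]
  rw [Equiv.symm_apply_eq, hg, Subtype.mk.injEq] at h
  exact h ▸ hk

variable [DecidableEq ι] {p h : ℕ} [hp : Fact p.Prime]

lemma exists_gcd_vecMul_le {B : Matrix ι ι (ZMod (p ^ h))} {D : ZMod (p ^ h)} (hD : B.det ∣ D)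
    {c : ι → ZMod (p ^ h)} {i₁ : ι} (hc : IsUnit (c i₁)) :
    ∃ i, (p ^ h).gcd ((c ᵥ* B) i).val ≤ (p ^ h).gcd D.val := by
  by_contra! hlt
  obtain ⟨a, -, ha⟩ := (Nat.dvd_prime_pow hp.out).1 (Nat.gcd_dvd_left (p ^ h) D.val)
  have hdvd (i : ι) : p ^ (a + 1) ∣ (p ^ h).gcd ((c ᵥ* B) i).val := by
    obtain ⟨b, -, hb⟩ := (Nat.dvd_prime_pow hp.out).1 (Nat.gcd_dvd_left (p ^ h) ((c ᵥ* B) i).val)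
    rw [hb]
    refine pow_dvd_pow p ((Nat.pow_lt_pow_iff_right hp.out.one_lt).1 ?_)
    rw [← ha, ← hb]
    exact hlt i
  have hq : p ^ (a + 1) ∣ p ^ h := (hdvd i₁).trans (Nat.gcd_dvd_left _ _)
  have hdet : ((p ^ (a + 1) : ℕ) : ZMod (p ^ h)) ∣ B.det := hc.dvd_mul_right.1 <|
    dvd_det_mul_of_dvd_vecMul (fun j => (natCast_dvd_zmod_iff hq _).2
      ((hdvd j).trans (Nat.gcd_dvd_right _ _))) i₁
  have hpow : p ^ (a + 1) ∣ p ^ a :=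
    ha ▸ Nat.dvd_gcd hq ((natCast_dvd_zmod_iff hq D).1 (hdet.trans hD))
  exact (Nat.pow_dvd_pow_iff_le_right hp.out.one_lt).1 hpow |>.not_gt a.lt_succ_self

variable {V : Matrix ι κ (ZMod (p ^ h))} {D : ZMod (p ^ h)}

-- Fewer than `card ι` of the forms can have a gcd exceeding that of `D`, for otherwise `D` would be
-- divisible by a higher power of `p`; the embedding `e` picks these out away from `i₀`.
lemma exists_prod_gcdWeight_vecMul_le (hV : ∀ e : ι ↪ κ, (V.submatrix id e).det ∣ D)
    (hικ : Fintype.card ι ≤ Fintype.card κ) (i₀ : ι) {c : ι → ZMod (p ^ h)} {i₁ : ι}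
    (hc : IsUnit (c i₁)) :
    ∃ e : ι ↪ κ, ∏ k, gcdWeight ((c ᵥ* V) k) ≤
      gcdWeight D ^ (Fintype.card κ - Fintype.card ι + 1) *
        ∏ i ∈ Finset.univ.erase i₀, gcdWeight ((c ᵥ* V.submatrix id e) i) := by
  let large : Finset κ := {k | (p ^ h).gcd D.val < (p ^ h).gcd ((c ᵥ* V) k).val}
  have card_large : large.card < Fintype.card ι := by
    by_contra! hle
    obtain ⟨f⟩ := Function.Embedding.nonempty_of_card_le (hle.trans_eq (Fintype.card_coe _).symm)
    obtain ⟨i, hi⟩ := exists_gcd_vecMul_le (hV (f.trans (Function.Embedding.subtype _))) hc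
    exact (Finset.mem_filter.1 (f i).2).2.not_ge hi
  obtain ⟨e, he⟩ := exists_embedding_forall_mem_exists_ne hικ i₀ card_large
  let s : Finset κ := (Finset.univ.erase i₀).map e
  have card_compl : sᶜ.card = Fintype.card κ - Fintype.card ι + 1 := by
    have : 0 < Fintype.card ι := Fintype.card_pos_iff.2 ⟨i₀⟩
    rw [Finset.card_compl, Finset.card_map, Finset.card_erase_of_mem (Finset.mem_univ _),
      Finset.card_univ]
    lia
  refine ⟨e, ?_⟩
  rw [← Finset.prod_mul_prod_compl s, mul_comm, Finset.prod_map, ← card_compl, ← Finset.prod_const]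
  refine mul_le_mul_of_nonneg_right (Finset.prod_le_prod (fun _ _ => gcdWeight_nonneg _) ?_)
    (Finset.prod_nonneg fun _ _ => gcdWeight_nonneg _)
  intro k hk
  have hsmall : (p ^ h).gcd ((c ᵥ* V) k).val ≤ (p ^ h).gcd D.val := by
    by_contra! hlt
    obtain ⟨i, hi, rfl⟩ := he k (Finset.mem_filter.2 ⟨Finset.mem_univ k, hlt⟩)
    exact Finset.mem_compl.1 hk
      (Finset.mem_map_of_mem e (Finset.mem_erase.2 ⟨hi, Finset.mem_univ i⟩))
  unfold gcdWeight
  gcongr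

lemma sum_prod_gcdWeight_vecMul_le [Nonempty ι] (hV : ∀ e : ι ↪ κ, (V.submatrix id e).det ∣ D)
    (hικ : Fintype.card ι ≤ Fintype.card κ) {T : Finset (ι → ZMod (p ^ h))}
    (hT : ∀ c ∈ T, ∃ i, IsUnit (c i)) :
    ∑ c ∈ T, ∏ k, gcdWeight ((c ᵥ* V) k) ≤
      Fintype.card (ι ↪ κ) * (gcdWeight D ^ (Fintype.card κ - Fintype.card ι + 1) *
        (((p ^ h).gcd D.val : ℝ) ^ Fintype.card ι *
          ((p ^ h : ℕ) * 2 ^ (Fintype.card ι - 1)))) := by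
  obtain ⟨i₀⟩ := ‹Nonempty ι›
  let w (y : ι → ZMod (p ^ h)) : ℝ := ∏ i ∈ Finset.univ.erase i₀, gcdWeight (y i)
  have w_nonneg (y) : 0 ≤ w y := Finset.prod_nonneg fun _ _ => gcdWeight_nonneg _
  let W : ℝ := gcdWeight D ^ (Fintype.card κ - Fintype.card ι + 1)
  have W_nonneg : 0 ≤ W := pow_nonneg (gcdWeight_nonneg D) _
  calc _ ≤ ∑ c ∈ T, ∑ e : ι ↪ κ, W * w (c ᵥ* V.submatrix id e) := by
        refine Finset.sum_le_sum fun c hc => ?_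
        obtain ⟨i₁, hi₁⟩ := hT c hc
        obtain ⟨e, he⟩ := exists_prod_gcdWeight_vecMul_le hV hικ i₀ hi₁
        exact he.trans (Finset.single_le_sum (f := fun e : ι ↪ κ => W * w (c ᵥ* V.submatrix id e))
          (fun e _ => mul_nonneg W_nonneg (w_nonneg _)) (Finset.mem_univ e))
    _ ≤ ∑ c, ∑ e : ι ↪ κ, W * w (c ᵥ* V.submatrix id e) :=
        Finset.sum_le_univ_sum_of_nonneg fun c =>
          Finset.sum_nonneg fun e _ => mul_nonneg W_nonneg (w_nonneg _)
    _ = ∑ e : ι ↪ κ, W * ∑ c, w (c ᵥ* V.submatrix id e) := by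
        rw [Finset.sum_comm]
        simp only [Finset.mul_sum]
    _ ≤ ∑ _e : ι ↪ κ, W * (((p ^ h).gcd D.val : ℝ) ^ Fintype.card ι *
          ((p ^ h : ℕ) * 2 ^ (Fintype.card ι - 1))) := by
        refine Finset.sum_le_sum fun e _ => mul_le_mul_of_nonneg_left ?_ W_nonneg
        refine (sum_vecMul_le (hV e) w_nonneg).trans (mul_le_mul_of_nonneg_left ?_ (by positivity))
        rw [sum_prod_erase_gcdWeight]
        gcongr
        · exact Finset.sum_nonneg fun x _ => gcdWeight_nonneg x
        · exact sum_gcdWeight_le_two h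
    _ = _ := by rw [Finset.sum_const, Finset.card_univ, nsmul_eq_mul]

end PrimitiveForms

section Blocks

open scoped Matrix

lemma prod_le_sum_prod_pow {α β γ : Type*} [Fintype α] [Nonempty α] [Fintype β] [Fintype γ]
    (b : α × β ↪ γ) {x : γ → ℝ} (x_nonneg : ∀ j, 0 ≤ x j) (x_le_one : ∀ j, x j ≤ 1) :
    ∏ j, x j ≤ ∑ l, ∏ k, x (b (l, k)) ^ Fintype.card α := by
  let y (l : α) : ℝ := ∏ k, x (b (l, k))
  have y_nonneg (l : α) : 0 ≤ y l := Finset.prod_nonneg fun _ _ => x_nonneg _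
  obtain ⟨l₀, -, hl₀⟩ := Finset.exists_max_image Finset.univ y Finset.univ_nonempty
  calc ∏ j, x j ≤ ∏ j ∈ Finset.univ.map b, x j :=
        Finset.prod_le_prod_of_subset_of_le_one (Finset.subset_univ _) (fun j _ => x_nonneg j)
          fun j _ _ => x_le_one j
    _ = ∏ l, y l := by rw [Finset.prod_map, Fintype.prod_prod_type]
    _ ≤ y l₀ ^ Fintype.card α := by
        rw [← Finset.card_univ, ← Finset.prod_const]
        exact Finset.prod_le_prod (fun l _ => y_nonneg l) hl₀
    _ ≤ ∑ l, y l ^ Fintype.card α :=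
        Finset.single_le_sum (f := fun l => y l ^ Fintype.card α)
          (fun l _ => pow_nonneg (y_nonneg l) _) (Finset.mem_univ l₀)
    _ = _ := by simp only [y, Finset.prod_pow]

lemma HighlyNonSingular.det_submatrix_ne_zero {m : ℕ} {V : Matrix (Fin 3) (Fin m) ℤ}
    (hV : HighlyNonSingular V) (e : Fin 3 ↪ Fin m) : (V.submatrix id e).det ≠ 0 := by
  have hcols : ((V.submatrix id e).map (Int.castRingHom ℚ)).col =
      ![(fun i => (V i (e 0) : ℚ)), (fun i => (V i (e 1) : ℚ)), (fun i => (V i (e 2) : ℚ))] := by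
    ext j i
    fin_cases j <;> rfl
  have hindep := hV.2 (e 0) (e 1) (e 2) (e.injective.ne (by decide)) (e.injective.ne (by decide))
    (e.injective.ne (by decide))
  rw [← hcols, Matrix.linearIndependent_cols_iff_isUnit, Matrix.isUnit_iff_isUnit_det,
    ← RingHom.mapMatrix_apply, ← RingHom.map_det, isUnit_iff_ne_zero] at hindep
  exact fun h => hindep (by rw [h, map_zero])

variable {ι κ l γ : Type*} [Fintype ι] [DecidableEq ι] [Nonempty ι] [Fintype κ] [Fintype l]
  [Nonempty l] [Fintype γ] {p k h : ℕ} [Fact p.Prime]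

-- With `2k` blocks, each block only needs the `2k`-th power of the Gauss sums, which is the scale
-- on which `gcdWeight` has bounded mean.
lemma sum_prod_norm_powerGaussSum_vecMul_le (hl : Fintype.card l = 2 * k) {K : ℝ}
    (hK : ∀ a : ZMod (p ^ h),
      (‖powerGaussSum k a‖ / (p : ℝ) ^ h) ^ k ≤ K * ((p ^ h).gcd a.val / (p : ℝ) ^ h))
    (A : Matrix ι γ (ZMod (p ^ h))) (b : l × κ ↪ γ) {D : ZMod (p ^ h)}
    (hD : ∀ i (e : ι ↪ κ), (A.submatrix id fun j => b (i, e j)).det ∣ D)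
    (hικ : Fintype.card ι ≤ Fintype.card κ) {T : Finset (ι → ZMod (p ^ h))}
    (hT : ∀ c ∈ T, ∃ i, IsUnit (c i)) :
    ∑ c ∈ T, ∏ j, ‖powerGaussSum k ((c ᵥ* A) j)‖ / (p : ℝ) ^ h ≤
      (2 * k) * ((K ^ 2) ^ Fintype.card κ * (Fintype.card (ι ↪ κ) *
        (gcdWeight D ^ (Fintype.card κ - Fintype.card ι + 1) *
          (((p ^ h).gcd D.val : ℝ) ^ Fintype.card ι *
            ((p ^ h : ℕ) * 2 ^ (Fintype.card ι - 1)))))) := by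
  let V (i : l) : Matrix ι κ (ZMod (p ^ h)) := A.submatrix id fun k => b (i, k)
  have hpow (a : ZMod (p ^ h)) :
      (‖powerGaussSum k a‖ / (p : ℝ) ^ h) ^ (2 * k) ≤ K ^ 2 * gcdWeight a := by
    rw [mul_comm, pow_mul, gcdWeight, Nat.cast_pow, ← mul_pow]
    gcongr
    exact hK a
  have hle_one (a : ZMod (p ^ h)) : ‖powerGaussSum k a‖ / (p : ℝ) ^ h ≤ 1 :=
    mod_cast norm_powerGaussSum_div_le_one a
  calc _ ≤ ∑ c ∈ T, ∑ i, (K ^ 2) ^ Fintype.card κ * ∏ k, gcdWeight ((c ᵥ* V i) k) := by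
        refine Finset.sum_le_sum fun c _ => ?_
        refine (prod_le_sum_prod_pow b (fun _ => by positivity) fun _ => hle_one _).trans
          (Finset.sum_le_sum fun i _ => ?_)
        rw [hl, ← Finset.card_univ, ← Finset.prod_const, ← Finset.prod_mul_distrib]
        exact Finset.prod_le_prod (fun _ _ => by positivity) fun k _ => hpow ((c ᵥ* V i) k)
    _ = ∑ i, (K ^ 2) ^ Fintype.card κ * ∑ c ∈ T, ∏ k, gcdWeight ((c ᵥ* V i) k) := by
        rw [Finset.sum_comm]
        simp only [Finset.mul_sum]
    _ ≤ ∑ _i : l, _ := Finset.sum_le_sum fun i _ =>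
        mul_le_mul_of_nonneg_left (sum_prod_gcdWeight_vecMul_le (hD i) hικ hT) (by positivity)
    _ = _ := by rw [Finset.sum_const, Finset.card_univ, hl, nsmul_eq_mul, Nat.cast_mul,
        Nat.cast_ofNat]

end Blocks

section PrimePowerBound

open scoped Matrix

variable {s : ℕ} (A : Matrix (Fin 3) (Fin s) ℤ)

lemma TBW_eq_prod_powerGaussSum (q : ℕ) [NeZero q] (c : Fin 3 → ℕ) :
    TBW A q c = ∏ j,
      powerGaussSum 4 (((fun i => (c i : ZMod q)) ᵥ* A.map (Int.cast : ℤ → ZMod q)) j) / q := by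
  have hlinear (j : Fin s) : ((∑ i, A i j * (c i : ℤ) : ℤ) : ZMod q) =
      ((fun i => (c i : ZMod q)) ᵥ* A.map (Int.cast : ℤ → ZMod q)) j := by
    simp [Matrix.vecMul, dotProduct, mul_comm]
  simp only [TBW, Squartic_eq_powerGaussSum, hlinear, Finset.prod_div_distrib, Finset.prod_const,
    Finset.card_univ, Fintype.card_fin, zpow_neg, zpow_natCast, inv_mul_eq_div]

lemma ABW_eq_sum_primitiveVectors (q : ℕ) :
    ABW A q = ∑ c ∈ primitiveVectors (Fin 3) q, TBW A q c := by
  have gcd_univ (c : Fin 3 → ℕ) : Finset.univ.gcd c = (c 0).gcd ((c 1).gcd (c 2)) := by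
    simp [Fin.univ_succ, gcd_eq_nat_gcd]
  simp only [ABW, primitiveVectors, Finset.sum_filter, gcd_univ]

lemma exists_isUnit_of_mem_primitiveVectors {ι : Type*} [Fintype ι] [DecidableEq ι] [Nonempty ι]
    {p h : ℕ} [hp : Fact p.Prime] {c : ι → ℕ} (hc : c ∈ primitiveVectors ι (p ^ h)) :
    ∃ i, IsUnit (c i : ZMod (p ^ h)) := by
  by_contra! hnot
  have hdvd (i : ι) : p ∣ c i ∧ h ≠ 0 := by
    have hcop := mt (ZMod.isUnit_iff_coprime (c i) (p ^ h)).2 (hnot i)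
    rw [Nat.coprime_comm] at hcop
    refine ⟨?_, fun h0 => hcop (by simp [h0])⟩
    by_contra hndvd
    exact hcop (((Nat.Prime.coprime_iff_not_dvd hp.out).2 hndvd).pow_left h)
  refine hp.out.one_lt.ne' (Nat.dvd_one.1 ?_)
  rw [← (Finset.mem_filter.1 hc).2]
  exact Nat.dvd_gcd (dvd_pow_self p (hdvd (Classical.arbitrary ι)).2)
    (Finset.dvd_gcd fun i _ => (hdvd i).1)

lemma norm_ABW_prime_pow_le (p h : ℕ) [Fact p.Prime] :
    ‖ABW A (p ^ h)‖ ≤ ∑ c : Fin 3 → ZMod (p ^ h) with ∃ i, IsUnit (c i),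
      ∏ j, ‖powerGaussSum 4 ((c ᵥ* A.map (Int.cast : ℤ → ZMod (p ^ h))) j)‖ / (p : ℝ) ^ h := by
  let F (c : Fin 3 → ZMod (p ^ h)) : ℝ := if ∃ i, IsUnit (c i) then
    ∏ j, ‖powerGaussSum 4 ((c ᵥ* A.map (Int.cast : ℤ → ZMod (p ^ h))) j)‖ / (p : ℝ) ^ h else 0
  have F_nonneg (c) : 0 ≤ F c := by
    simp only [F]
    split_ifs <;> positivity
  rw [Finset.sum_filter, ← sum_piFinset_Icc_natCast_zmod (p ^ h) F, ABW_eq_sum_primitiveVectors]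
  calc _ ≤ ∑ c ∈ primitiveVectors (Fin 3) (p ^ h), F fun i => c i := by
        refine norm_sum_le_of_le _ fun c hc => ?_
        simp only [F, if_pos (exists_isUnit_of_mem_primitiveVectors hc), TBW_eq_prod_powerGaussSum,
          norm_prod, norm_div, Nat.cast_pow, norm_pow, Complex.norm_natCast, le_refl]
    _ ≤ _ := Finset.sum_le_sum_of_subset_of_nonneg (Finset.filter_subset _ _)
        fun c _ _ => F_nonneg _

lemma gcd_val_intCast (q : ℕ) [NeZero q] (D : ℤ) : q.gcd (D : ZMod q).val = q.gcd D.natAbs := by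
  have h := Int.gcd_emod D q
  rw [← ZMod.val_intCast] at h
  rw [Nat.gcd_comm, Nat.gcd_comm q]
  exact h

/-- The position in `Fin s` of the `k`-th column of the `l`-th of the eight blocks `A₀, …, A₇` of a
propitious matrix. -/
def blockColumn (hs : 32 ≤ s) : Fin 8 × Fin 4 ↪ Fin s :=
  finProdFinEquiv.toEmbedding.trans (Fin.castLEEmb hs)

lemma blockColumn_apply (hs : 32 ≤ s) (l : Fin 8) (k : Fin 4) :
    blockColumn hs (l, k) = ⟨4 * l + k, by lia⟩ := by
  ext
  simp [blockColumn, finProdFinEquiv, add_comm]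

variable {A}

lemma Propitious.exists_forall_det_dvd (hA : Propitious A) :
    ∃ (b : Fin 8 × Fin 4 ↪ Fin s) (D : ℤ), D ≠ 0 ∧
      ∀ l (e : Fin 3 ↪ Fin 4), (A.submatrix id fun j => b (l, e j)).det ∣ D := by
  obtain ⟨hs, hblock⟩ := hA
  let minor (x : Fin 8 × (Fin 3 ↪ Fin 4)) : ℤ :=
    (A.submatrix id fun j => blockColumn hs (x.1, x.2 j)).det
  have minor_ne_zero (x) : minor x ≠ 0 := by
    simp only [minor, blockColumn_apply]
    exact (hblock x.1).det_submatrix_ne_zero x.2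
  obtain ⟨D, hD₀, hD⟩ : ∃ D ≠ 0, ∀ x, minor x ∣ D :=
    ⟨∏ x, minor x, Finset.prod_ne_zero_iff.2 fun x _ => minor_ne_zero x,
      fun x => Finset.dvd_prod_of_mem minor (Finset.mem_univ x)⟩
  exact ⟨blockColumn hs, D, hD₀, fun l e => hD (l, e)⟩

lemma norm_ABW_prime_pow_mul_sq_le {p h : ℕ} [Fact p.Prime] {K : ℝ}
    (hK : ∀ a : ZMod (p ^ h),
      (‖powerGaussSum 4 a‖ / (p : ℝ) ^ h) ^ 4 ≤ K * ((p ^ h).gcd a.val / (p : ℝ) ^ h))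
    (b : Fin 8 × Fin 4 ↪ Fin s) {D : ℤ}
    (hD : ∀ l (e : Fin 3 ↪ Fin 4), (A.submatrix id fun j => b (l, e j)).det ∣ D) :
    ‖ABW A (p ^ h)‖ * ((p : ℝ) ^ h) ^ 2 ≤
      768 * K ^ 8 * ((p ^ h).gcd D.natAbs : ℝ) ^ 7 / (p : ℝ) ^ h := by
  have hDq (l : Fin 8) (e : Fin 3 ↪ Fin 4) :
      ((A.map (Int.cast : ℤ → ZMod (p ^ h))).submatrix id fun j => b (l, e j)).det ∣
        (D : ZMod (p ^ h)) := by
    rw [Matrix.submatrix_map, ← Int.cast_det]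
    exact Int.cast_dvd_cast _ _ (hD l e)
  have hsum := (norm_ABW_prime_pow_le A p h).trans
    (sum_prod_norm_powerGaussSum_vecMul_le (by simp) hK _ b hDq (by simp) (by simp))
  have card_embedding : Fintype.card (Fin 3 ↪ Fin 4) = 24 := by
    simp [Fintype.card_embedding_eq, Nat.descFactorial]
  have hp : (0 : ℝ) < p := Nat.cast_pos.2 (NeZero.pos p)
  rw [card_embedding, Fintype.card_fin, Fintype.card_fin, gcdWeight, gcd_val_intCast,
    Nat.cast_pow] at hsum
  calc _ ≤ _ := mul_le_mul_of_nonneg_right hsum (by positivity)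
    _ = _ := by
        simp only [div_pow, Nat.reduceSub, Nat.reduceAdd, Nat.cast_ofNat]
        field_simp
        ring

lemma Propitious.exists_norm_ABW_prime_pow_le (hA : Propitious A) :
    ∃ (P : ℕ) (B : ℝ), 1 ≤ B ∧ ∀ p [Fact p.Prime] (h : ℕ),
      ‖ABW A (p ^ h)‖ * ((p : ℝ) ^ h) ^ 2 ≤ B ∧
      (P ≤ p → h ≠ 0 → ‖ABW A (p ^ h)‖ * ((p : ℝ) ^ h) ^ 2 ≤ 1) := by
  obtain ⟨P₀, K, hK₁, hK⟩ := exists_norm_powerGaussSum_le (k := 4) (by norm_num)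
  obtain ⟨b, D, hD₀, hD⟩ := hA.exists_forall_det_dvd
  have hbound (p : ℕ) [Fact p.Prime] (h : ℕ) := norm_ABW_prime_pow_mul_sq_le (hK p h) b hD
  have natAbs_pos : 0 < D.natAbs := Int.natAbs_pos.2 hD₀
  refine ⟨max (max P₀ 768) (D.natAbs + 1), 768 * K ^ 8 * (D.natAbs : ℝ) ^ 7, ?_,
    fun p hp h => ⟨?_, fun hP h₀ => ?_⟩⟩
  · have hD₁ : (1 : ℝ) ≤ D.natAbs := mod_cast natAbs_pos
    nlinarith [mul_le_mul (one_le_pow₀ hK₁ (n := 8)) (one_le_pow₀ hD₁ (n := 7)) zero_le_one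
      (by positivity)]
  · have hp₁ : (1 : ℝ) ≤ (p : ℝ) ^ h := one_le_pow₀ (mod_cast hp.out.one_le)
    have hgcd : ((p ^ h).gcd D.natAbs : ℝ) ≤ D.natAbs :=
      mod_cast Nat.gcd_le_right _ natAbs_pos
    refine (hbound p h).trans ((div_le_self (by split_ifs <;> positivity) hp₁).trans ?_)
    gcongr
    split_ifs
    exacts [le_rfl, hK₁]
  · have hcoprime : (p ^ h).gcd D.natAbs = 1 :=
      Nat.Coprime.pow_left h (Nat.coprime_of_lt_prime natAbs_pos.ne' (by lia) hp.out)
    have hp768 : (768 : ℝ) ≤ (p : ℝ) ^ h := by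
      have : 768 ≤ p ^ h := le_trans (by lia) (Nat.le_self_pow h₀ p)
      exact_mod_cast this
    refine (hbound p h).trans ?_
    rw [if_neg (by lia), hcoprime, div_le_one (by positivity)]
    simpa using hp768

end PrimePowerBound

section DiagonalZeros

open scoped Matrix

variable {ι κ : Type*} [Fintype κ] (A : Matrix ι κ ℤ) (k : ℕ)

/-- The solutions over `R` of the system of diagonal equations `∑ⱼ aᵢⱼ xⱼᵏ = 0`. -/
def diagonalZeros (R : Type*) [CommRing R] : Set (κ → R) :=
  {x | A.map (Int.cast : ℤ → R) *ᵥ x ^ k = 0}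

variable {A k} {R S : Type*} [CommRing R] [CommRing S]

lemma comp_map_mulVec_pow (f : R →+* S) (x : κ → R) :
    f ∘ (A.map (Int.cast : ℤ → R) *ᵥ x ^ k) = A.map (Int.cast : ℤ → S) *ᵥ (f ∘ x) ^ k := by
  ext i
  simp [Matrix.mulVec, dotProduct]

lemma comp_mem_diagonalZeros (f : R →+* S) {x : κ → R} (hx : x ∈ diagonalZeros A k R) :
    f ∘ x ∈ diagonalZeros A k S := by
  rw [diagonalZeros, Set.mem_ofPred_eq] at hx ⊢
  rw [← comp_map_mulVec_pow, hx]
  exact funext fun _ => map_zero f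

lemma card_diagonalZeros_congr (e : R ≃+* S) :
    Nat.card (diagonalZeros A k R) = Nat.card (diagonalZeros A k S) := by
  refine Nat.card_congr ((Equiv.piCongrRight fun _ => e.toEquiv).subtypeEquiv fun x => ?_)
  refine ⟨fun hx => comp_mem_diagonalZeros (e : R →+* S) hx, fun hx => ?_⟩
  convert comp_mem_diagonalZeros (e.symm : S →+* R) hx
  ext j
  simp

lemma card_diagonalZeros_prod :
    Nat.card (diagonalZeros A k (R × S)) =
      Nat.card (diagonalZeros A k R) * Nat.card (diagonalZeros A k S) := by
  rw [← Nat.card_prod, ← Nat.card_congr (Equiv.Set.prod _ _)]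
  refine Nat.card_congr ((Equiv.arrowProdEquivProdArrow κ (fun _ => R) fun _ => S).subtypeEquiv
    fun x => ⟨fun hx => ⟨comp_mem_diagonalZeros (RingHom.fst R S) hx,
      comp_mem_diagonalZeros (RingHom.snd R S) hx⟩, fun ⟨hR, hS⟩ => ?_⟩)
  have hfst := comp_map_mulVec_pow (A := A) (k := k) (RingHom.fst R S) x
  have hsnd := comp_map_mulVec_pow (A := A) (k := k) (RingHom.snd R S) x
  exact funext fun i => Prod.ext ((congrFun hfst i).trans (congrFun hR i))
    ((congrFun hsnd i).trans (congrFun hS i))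

lemma card_diagonalZeros_zmod_mul {m n : ℕ} (h : m.Coprime n) :
    Nat.card (diagonalZeros A k (ZMod (m * n))) =
      Nat.card (diagonalZeros A k (ZMod m)) * Nat.card (diagonalZeros A k (ZMod n)) :=
  (card_diagonalZeros_congr (ZMod.chineseRemainder h)).trans card_diagonalZeros_prod

lemma addChar_map_sum {α G M : Type*} [AddCommMonoid G] [CommMonoid M] (ψ : AddChar G M)
    (t : Finset α) (f : α → G) : ψ (∑ i ∈ t, f i) = ∏ i ∈ t, ψ (f i) :=
  map_prod ψ.toMonoidHom (fun i => Multiplicative.ofAdd (f i)) t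

variable {q : ℕ} [NeZero q]

lemma prod_powerGaussSum [DecidableEq κ] (a : κ → ZMod q) :
    ∏ j, powerGaussSum k (a j) = ∑ x : κ → ZMod q, (ZMod.stdAddChar (a ⬝ᵥ x ^ k) : ℂ) := by
  simp only [powerGaussSum, Finset.prod_univ_sum, Fintype.piFinset_univ, dotProduct,
    addChar_map_sum, Pi.pow_apply]

variable [Fintype ι] [DecidableEq ι]

lemma sum_stdAddChar_dotProduct (v : ι → ZMod q) :
    ∑ c : ι → ZMod q, (ZMod.stdAddChar (c ⬝ᵥ v) : ℂ) =
      if v = 0 then (q : ℂ) ^ Fintype.card ι else 0 := by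
  simp only [dotProduct, addChar_map_sum]
  rw [← Fintype.piFinset_univ, ← Finset.prod_univ_sum (fun _ => Finset.univ)
    fun i a => (ZMod.stdAddChar (a * v i) : ℂ)]
  simp only [AddChar.sum_mulShift _ (ZMod.isPrimitive_stdAddChar q), ZMod.card]
  split_ifs with hv
  · simp [hv]
  · obtain ⟨i, hi⟩ := Function.ne_iff.1 hv
    exact Finset.prod_eq_zero (Finset.mem_univ i) (by simp [show v i ≠ 0 from hi])

lemma sum_prod_powerGaussSum_vecMul :
    ∑ c : ι → ZMod q, ∏ j, powerGaussSum k ((c ᵥ* A.map (Int.cast : ℤ → ZMod q)) j) =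
      (q : ℂ) ^ Fintype.card ι * Nat.card (diagonalZeros A k (ZMod q)) := by
  simp only [prod_powerGaussSum, ← Matrix.dotProduct_mulVec]
  rw [Finset.sum_comm]
  simp only [sum_stdAddChar_dotProduct]
  rw [← Finset.sum_filter, Finset.sum_const, nsmul_eq_mul, mul_comm, Nat.card_eq_fintype_card,
    Fintype.card_subtype]
  congr!

end DiagonalZeros

section Multiplicativity

open scoped Matrix

variable {s : ℕ} (A : Matrix (Fin 3) (Fin s) ℤ)

lemma TBW_smul (g d : ℕ) (c : Fin 3 → ℕ) (hg : 0 < g) (hd : 0 < d) :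
    TBW A (g * d) (g • c) = TBW A d c := by
  have : NeZero d := ⟨hd.ne'⟩
  have : NeZero (g * d) := ⟨(Nat.mul_pos hg hd).ne'⟩
  have hg₀ : (g : ℂ) ≠ 0 := Nat.cast_ne_zero.2 hg.ne'
  have hform (j : Fin s) :
      ∑ i, A i j * ((g • c) i : ℤ) = g * ∑ i, A i j * (c i : ℤ) := by
    simp [Finset.mul_sum, mul_left_comm]
  simp only [TBW, hform, Squartic_eq_powerGaussSum, powerGaussSum_natCast_mul rfl,
    Finset.prod_mul_distrib, Finset.prod_const, Finset.card_univ, Fintype.card_fin, Nat.cast_mul,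
    zpow_neg, zpow_natCast, mul_pow]
  field_simp

/-- The density `q^{3-s} · #{x mod q : ∑ⱼ aᵢⱼ xⱼ⁴ ≡ 0 mod q}` of solutions modulo `q`, as an
arithmetic function of `q`. -/
noncomputable def solutionDensity : ArithmeticFunction ℂ where
  toFun q := (q : ℂ) ^ 3 * Nat.card (diagonalZeros A 4 (ZMod q)) / (q : ℂ) ^ s
  map_zero' := by simp

/-- The terms `𝔄(q)` of the singular series, as an arithmetic function. -/
noncomputable def singularSeriesTerm : ArithmeticFunction ℂ where
  toFun := ABW A
  map_zero' := by simp [ABW]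

lemma singularSeriesTerm_apply (q : ℕ) : singularSeriesTerm A q = ABW A q := rfl

lemma singularSeriesTerm_mul_zeta :
    singularSeriesTerm A * (ArithmeticFunction.zeta : ArithmeticFunction ℂ) =
      solutionDensity A := by
  ext q
  rcases Nat.eq_zero_or_pos q with rfl | hq
  · simp
  have : NeZero q := ⟨hq.ne'⟩
  calc _ = ∑ d ∈ q.divisors, ∑ c ∈ primitiveVectors (Fin 3) d, TBW A d c := by
        simp only [ArithmeticFunction.coe_mul_zeta_apply, singularSeriesTerm_apply,
          ABW_eq_sum_primitiveVectors]
    _ = ∑ c ∈ Fintype.piFinset fun _ : Fin 3 => Finset.Icc 1 q, TBW A q c :=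
        (sum_piFinset_Icc_eq_sum_divisors (TBW_smul A) hq).symm
    _ = ∑ c : Fin 3 → ZMod q,
          ∏ j, powerGaussSum 4 ((c ᵥ* A.map (Int.cast : ℤ → ZMod q)) j) / q := by
        simp only [TBW_eq_prod_powerGaussSum]
        exact sum_piFinset_Icc_natCast_zmod q fun c =>
          ∏ j, powerGaussSum 4 ((c ᵥ* A.map (Int.cast : ℤ → ZMod q)) j) / q
    _ = solutionDensity A q := by
        simp only [Finset.prod_div_distrib, ← Finset.sum_div, Finset.prod_const,
          Finset.card_univ, Fintype.card_fin]
        rw [sum_prod_powerGaussSum_vecMul, Fintype.card_fin]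
        rfl

lemma isMultiplicative_solutionDensity : (solutionDensity A).IsMultiplicative := by
  refine ⟨?_, fun {m n} h => ?_⟩
  · have : Nat.card (diagonalZeros A 4 (ZMod 1)) = 1 :=
      Nat.card_eq_one_iff_unique.2 ⟨inferInstance, ⟨0, Subsingleton.elim _ _⟩⟩
    rw [solutionDensity, ArithmeticFunction.coe_mk, this]
    simp
  · simp only [solutionDensity, ArithmeticFunction.coe_mk, card_diagonalZeros_zmod_mul h,
      Nat.cast_mul, mul_pow]
    rw [mul_mul_mul_comm, mul_div_mul_comm]

lemma isMultiplicative_singularSeriesTerm : (singularSeriesTerm A).IsMultiplicative := by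
  have hmoebius : singularSeriesTerm A =
      solutionDensity A * (ArithmeticFunction.moebius : ArithmeticFunction ℂ) := by
    rw [← singularSeriesTerm_mul_zeta, mul_assoc, ArithmeticFunction.coe_zeta_mul_coe_moebius,
      mul_one]
  rw [hmoebius]
  exact (isMultiplicative_solutionDensity A).mul ArithmeticFunction.isMultiplicative_moebius.intCast

lemma sum_range_ABW_prime_pow {p : ℕ} (hp : p.Prime) (h : ℕ) :
    ∑ m ∈ Finset.range (h + 1), ABW A (p ^ m) = solutionDensity A (p ^ h) := by
  rw [← singularSeriesTerm_mul_zeta, ArithmeticFunction.coe_mul_zeta_apply,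
    Nat.sum_divisors_prime_pow hp]
  rfl

end Multiplicativity

section MultiplicativeBound

lemma norm_le_pow_of_isMultiplicative {R : Type*} [NormedCommRing R] [NormOneClass R]
    {f : ArithmeticFunction R} (hf : f.IsMultiplicative) {P : ℕ} {B : ℝ} (hB : 1 ≤ B)
    (hle : ∀ p : ℕ, p.Prime → ∀ h, ‖f (p ^ h)‖ ≤ B)
    (hlarge : ∀ p : ℕ, p.Prime → P ≤ p → ∀ h ≠ 0, ‖f (p ^ h)‖ ≤ 1) (n : ℕ) :
    ‖f n‖ ≤ B ^ P := by
  rcases eq_or_ne n 0 with rfl | hn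
  · simpa using (zero_le_one.trans (one_le_pow₀ hB) : (0 : ℝ) ≤ B ^ P)
  have hfactor : ∀ p ∈ n.primeFactors, ‖f (p ^ n.factorization p)‖ ≤ if p < P then B else 1 := by
    intro p hp
    have hprime := Nat.prime_of_mem_primeFactors hp
    split_ifs with hlt
    · exact hle p hprime _
    · exact hlarge p hprime (not_lt.1 hlt) _
        (hprime.factorization_pos_of_dvd hn (Nat.dvd_of_mem_primeFactors hp)).ne'
  rw [hf.multiplicative_factorization _ hn]
  calc ‖∏ p ∈ n.primeFactors, f (p ^ n.factorization p)‖
      ≤ ∏ p ∈ n.primeFactors, ‖f (p ^ n.factorization p)‖ := Finset.norm_prod_le _ _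
    _ ≤ ∏ p ∈ n.primeFactors, if p < P then B else 1 :=
        Finset.prod_le_prod (fun _ _ => norm_nonneg _) hfactor
    _ = B ^ (n.primeFactors.filter (· < P)).card := by
        rw [← Finset.prod_filter, Finset.prod_const]
    _ ≤ B ^ P := by
        refine pow_le_pow_right₀ hB ((Finset.card_le_card fun p hp => ?_).trans
          (Finset.card_range P).le)
        exact Finset.mem_range.2 (Finset.mem_filter.1 hp).2

lemma Propitious.exists_norm_ABW_le {s : ℕ} {A : Matrix (Fin 3) (Fin s) ℤ} (hA : Propitious A) :
    ∃ C : ℝ, 0 < C ∧ ∀ q : ℕ, ‖ABW A q‖ ≤ C / (q : ℝ) ^ 2 := by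
  obtain ⟨P, B, hB, hbound⟩ := hA.exists_norm_ABW_prime_pow_le
  let f : ArithmeticFunction ℂ := ⟨fun q => ABW A q * (q : ℂ) ^ 2, by simp⟩
  have hf : f.IsMultiplicative := by
    have := isMultiplicative_singularSeriesTerm A
    refine ⟨by simpa [f, singularSeriesTerm_apply] using this.1, fun {m n} hmn => ?_⟩
    have hmul := this.2 hmn
    simp only [singularSeriesTerm_apply] at hmul
    simp only [f, ArithmeticFunction.coe_mk, hmul, Nat.cast_mul]
    ring
  have hnorm (q : ℕ) : ‖f q‖ = ‖ABW A q‖ * (q : ℝ) ^ 2 := by simp [f]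
  refine ⟨B ^ P, by positivity, fun q => ?_⟩
  rcases eq_or_ne q 0 with rfl | hq
  · simp [ABW]
  rw [le_div_iff₀ (by positivity), ← hnorm]
  refine norm_le_pow_of_isMultiplicative hf hB (fun p hp h => ?_)
    (fun p hp hPp h hh => ?_) q
  all_goals
    have : Fact p.Prime := ⟨hp⟩
    rw [hnorm, Nat.cast_pow]
  · exact (hbound p h).1
  · exact (hbound p h).2 hPp hh

end MultiplicativeBound

section PadicSolutions

open scoped Matrix

lemma injective_of_det_submatrix_ne_zero {ι κ R : Type*} [Fintype ι] [DecidableEq ι] [CommRing R]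
    {M : Matrix ι κ R} {e : ι → κ} (he : (M.submatrix id e).det ≠ 0) : Function.Injective e :=
  fun _ _ hij => by_contra fun hne =>
    he (Matrix.det_zero_of_column_eq hne fun k => congrArg (M k) hij)

lemma exists_det_submatrix_ne_zero_of_rank_eq {ι κ K : Type*} [Fintype ι] [DecidableEq ι]
    [Fintype κ] [Field K] {M : Matrix ι κ K} (hM : M.rank = Fintype.card ι) :
    ∃ e : ι → κ, (M.submatrix id e).det ≠ 0 := by
  obtain ⟨η, a, ha, hspan, hli⟩ := exists_linearIndependent' K M.col
  have : Fintype η := Fintype.ofInjective a ha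
  have hcard := finrank_span_eq_card hli
  rw [hspan, ← Matrix.rank_eq_finrank_span_cols, hM] at hcard
  let σ : ι ≃ η := Fintype.equivOfCardEq hcard
  have hcols : LinearIndependent K (M.submatrix id (a ∘ σ)).col := hli.comp σ σ.injective
  rw [Matrix.linearIndependent_cols_iff_isUnit, Matrix.isUnit_iff_isUnit_det] at hcols
  exact ⟨a ∘ σ, hcols.ne_zero⟩

lemma mulVec_eq_submatrix_mulVec {ι κ η R : Type*} [Fintype κ] [Fintype η]
    [NonUnitalNonAssocSemiring R] (M : Matrix ι κ R) {e : η → κ} (he : Function.Injective e)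
    {v : κ → R} (hv : ∀ j ∉ Set.range e, v j = 0) :
    M *ᵥ v = M.submatrix id e *ᵥ (v ∘ e) :=
  funext fun i => (Fintype.sum_of_injective e he _ _
    (fun j hj => by rw [hv j hj, mul_zero]) fun _ => rfl).symm

lemma dvd_mulVec {ι κ R : Type*} [Fintype κ] [CommSemiring R] {a : R} (M : Matrix ι κ R)
    {v : κ → R} (hv : ∀ j, a ∣ v j) (i : ι) : a ∣ (M *ᵥ v) i :=
  Finset.dvd_sum fun j _ => (hv j).mul_left _

variable {ι κ : Type*} [Fintype ι] [DecidableEq ι] {p : ℕ} [Fact p.Prime] {k : ℕ}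

lemma exists_forall_dvd_exists_mul_pow_eq {D y : ℤ_[p]} (hD : D ≠ 0) (hy : y ≠ 0) (hk : k ≠ 0) :
    ∃ m, ∀ b, (p : ℤ_[p]) ^ m ∣ D * y ^ k - b → ∃ z, D * z ^ k = b := by
  have hderiv : D * (k * y ^ (k - 1)) ≠ 0 :=
    mul_ne_zero hD (mul_ne_zero (Nat.cast_ne_zero.2 hk) (pow_ne_zero _ hy))
  obtain ⟨m, hm⟩ := PadicInt.exists_pow_neg_lt p (pow_pos (norm_pos_iff.2 hderiv) 2)
  refine ⟨m, fun b hb => ?_⟩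
  let F : Polynomial ℤ_[p] := Polynomial.C D * Polynomial.X ^ k - Polynomial.C b
  have hF (t : ℤ_[p]) : F.aeval t = D * t ^ k - b := by simp [F]
  have hF' : F.derivative.aeval y = D * (k * y ^ (k - 1)) := by
    simp [F, Polynomial.derivative_X_pow]
  have hnorm : ‖F.aeval y‖ < ‖F.derivative.aeval y‖ ^ 2 := by
    rw [hF, hF']
    exact ((PadicInt.norm_le_pow_iff_mem_span_pow _ m).2
      (Ideal.mem_span_singleton.2 hb)).trans_lt hm
  obtain ⟨z, hz, -⟩ := hensels_lemma hnorm
  exact ⟨z, sub_eq_zero.1 ((hF z).symm.trans hz)⟩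

-- Multiplying by the adjugate decouples the system into one equation `det M * zᵢᵏ = bᵢ` per `i`.
lemma exists_forall_dvd_exists_mulVec_pow_eq {M : Matrix ι ι ℤ_[p]} (hM : M.det ≠ 0)
    {y : ι → ℤ_[p]} (hy : ∀ i, y i ≠ 0) (hk : k ≠ 0) :
    ∃ m, ∀ v, (∀ i, (p : ℤ_[p]) ^ m ∣ (M *ᵥ y ^ k - v) i) → ∃ z, M *ᵥ z ^ k = v := by
  have hadj (u : ι → ℤ_[p]) : M.adjugate *ᵥ (M *ᵥ u) = M.det • u := by
    rw [Matrix.mulVec_mulVec, Matrix.adjugate_mul, Matrix.smul_mulVec, Matrix.one_mulVec]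
  choose m hm using fun i => exists_forall_dvd_exists_mul_pow_eq hM (hy i) hk
  refine ⟨Finset.univ.sup m, fun v hv => ?_⟩
  have hdvd (i : ι) : (p : ℤ_[p]) ^ m i ∣ M.det * y i ^ k - (M.adjugate *ᵥ v) i := by
    have := dvd_mulVec M.adjugate hv i
    rw [Matrix.mulVec_sub, hadj] at this
    exact (pow_dvd_pow _ (Finset.le_sup (Finset.mem_univ i))).trans this
  choose z hz using fun i => hm i _ (hdvd i)
  refine ⟨z, sub_eq_zero.1 (Matrix.eq_zero_of_mulVec_eq_zero (M := M.adjugate) ?_ ?_)⟩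
  · rw [Matrix.det_adjugate]
    exact pow_ne_zero _ hM
  · rw [Matrix.mulVec_sub, hadj, sub_eq_zero]
    exact funext hz

variable [Fintype κ]

lemma exists_forall_dvd_exists_mulVec_pow_eq_zero {M : Matrix ι κ ℤ_[p]} {e : ι → κ}
    (he : (M.submatrix id e).det ≠ 0) {y : κ → ℤ_[p]} (hy : M *ᵥ y ^ k = 0)
    (hye : ∀ i, y (e i) ≠ 0) (hk : k ≠ 0) :
    ∃ m, ∀ x : κ → ℤ_[p], (∀ j, (p : ℤ_[p]) ^ m ∣ (y - x) j) →
      ∃ z, M *ᵥ z ^ k = 0 ∧ ∀ j ∉ Set.range e, z j = x j := by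
  have hinj := injective_of_det_submatrix_ne_zero he
  obtain ⟨m, hm⟩ := exists_forall_dvd_exists_mulVec_pow_eq he (y := y ∘ e) hye hk
  refine ⟨m, fun x hx => ?_⟩
  have hpow (j : κ) : (p : ℤ_[p]) ^ m ∣ (y ^ k - x ^ k) j :=
    (hx j).trans (sub_dvd_pow_sub_pow _ _ k)
  obtain ⟨w, hw⟩ := hm (M.submatrix id e *ᵥ (x ∘ e) ^ k - M *ᵥ x ^ k) fun i => by
    have hsplit : M.submatrix id e *ᵥ (y ∘ e) ^ k -
        (M.submatrix id e *ᵥ (x ∘ e) ^ k - M *ᵥ x ^ k) =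
        M.submatrix id e *ᵥ ((y ^ k - x ^ k) ∘ e) - M *ᵥ (y ^ k - x ^ k) := by
      have hcomp : (y ^ k - x ^ k) ∘ e = (y ∘ e) ^ k - (x ∘ e) ^ k := rfl
      rw [hcomp, Matrix.mulVec_sub, Matrix.mulVec_sub, hy]
      abel
    rw [hsplit]
    exact dvd_sub (dvd_mulVec _ (fun j => hpow (e j)) i) (dvd_mulVec M hpow i)
  have hoff : ∀ j ∉ Set.range e, Function.extend e w x j = x j := fun j hj =>
    Function.extend_apply' w x j hj
  refine ⟨Function.extend e w x, ?_, hoff⟩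
  have hdiff := mulVec_eq_submatrix_mulVec M hinj (v := Function.extend e w x ^ k - x ^ k)
    fun j hj => by simp [hoff j hj]
  have hcomp : (Function.extend e w x ^ k - x ^ k) ∘ e = w ^ k - (x ∘ e) ^ k :=
    funext fun i => by simp [hinj.extend_apply]
  rw [hcomp, Matrix.mulVec_sub, Matrix.mulVec_sub, hw] at hdiff
  linear_combination hdiff

end PadicSolutions

section LocalDensity

open scoped Matrix

variable {ι κ : Type*} [Fintype ι] [Fintype κ] {p : ℕ} [Fact p.Prime] {k : ℕ}

lemma eq_of_toZModPow_pow_mul_eq {m h a b : ℕ} (ha : a < p ^ h) (hb : b < p ^ h)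
    (hab : PadicInt.toZModPow (m + h) ((p : ℤ_[p]) ^ m * (a : ℤ_[p])) =
      PadicInt.toZModPow (m + h) ((p : ℤ_[p]) ^ m * (b : ℤ_[p]))) : a = b := by
  have hcast : ((p ^ m * a : ℕ) : ZMod (p ^ (m + h))) = ((p ^ m * b : ℕ) : ZMod (p ^ (m + h))) := by
    simpa using hab
  rw [ZMod.natCast_eq_natCast_iff, pow_add] at hcast
  exact (Nat.ModEq.mul_left_cancel' (pow_ne_zero _ (Fact.out : p.Prime).ne_zero)
    hcast).eq_of_lt_of_lt ha hb

lemma card_compl_range_of_injective {e : ι → κ} (he : Function.Injective e) :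
    Nat.card ↥(Set.range e)ᶜ = Fintype.card κ - Fintype.card ι := by
  rw [Nat.card_coe_set_eq, Set.ncard_compl, ← Nat.card_coe_set_eq,
    Nat.card_range_of_injective he, Nat.card_eq_fintype_card, Nat.card_eq_fintype_card]

-- The coordinates outside the range of `e` may be moved freely in their class modulo `p ^ m`.
lemma exists_forall_pow_le_card_diagonalZeros [DecidableEq ι] {A : Matrix ι κ ℤ} {e : ι → κ}
    (he : (A.submatrix id e).det ≠ 0) {y : κ → ℤ_[p]} (hy : y ∈ diagonalZeros A k ℤ_[p])
    (hye : ∀ i, y (e i) ≠ 0) (hk : k ≠ 0) :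
    ∃ m, ∀ h, (p ^ h) ^ (Fintype.card κ - Fintype.card ι) ≤
      Nat.card (diagonalZeros A k (ZMod (p ^ (m + h)))) := by
  have hdet : ((A.map (Int.cast : ℤ → ℤ_[p])).submatrix id e).det ≠ 0 := by
    rw [Matrix.submatrix_map, ← Int.cast_det]
    exact Int.cast_ne_zero.2 he
  obtain ⟨m, hm⟩ := exists_forall_dvd_exists_mulVec_pow_eq_zero hdet hy hye hk
  refine ⟨m, fun h => ?_⟩
  let shift (t : ↥(Set.range e)ᶜ → Fin (p ^ h)) (j : κ) : ℤ_[p] :=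
    Function.extend Subtype.val (fun i => ((t i : ℕ) : ℤ_[p])) 0 j
  choose z hz hzoff using fun t => hm (fun j => y j + (p : ℤ_[p]) ^ m * shift t j)
    fun j => ⟨-shift t j, by simp⟩
  let reduce (t : ↥(Set.range e)ᶜ → Fin (p ^ h)) : diagonalZeros A k (ZMod (p ^ (m + h))) :=
    ⟨PadicInt.toZModPow (m + h) ∘ z t, comp_mem_diagonalZeros _ (hz t)⟩
  have hreduce : Function.Injective reduce := by
    intro t t' htt'
    ext j
    have hj : PadicInt.toZModPow (m + h) (z t j) = PadicInt.toZModPow (m + h) (z t' j) :=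
      congrFun (congrArg Subtype.val htt') j
    have hshift (u) : shift u j = ((u j : ℕ) : ℤ_[p]) := Subtype.val_injective.extend_apply _ _ _
    rw [hzoff t j j.2, hzoff t' j j.2, hshift, hshift, map_add, map_add, add_right_inj] at hj
    exact eq_of_toZModPow_pow_mul_eq (t j).2 (t' j).2 hj
  have : NeZero (p ^ (m + h)) := ⟨pow_ne_zero _ (Fact.out : p.Prime).ne_zero⟩
  have hcard := Nat.card_le_card_of_injective reduce hreduce
  rwa [Nat.card_fun, Nat.card_fin, card_compl_range_of_injective
    (injective_of_det_submatrix_ne_zero he)] at hcard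

variable {s : ℕ} {A : Matrix (Fin 3) (Fin s) ℤ}

lemma NonsingularSol.exists_mem_diagonalZeros {x : Fin s → ℚ_[p]} (hx : NonsingularSol A x) :
    ∃ (e : Fin 3 → Fin s) (y : Fin s → ℤ_[p]), (A.submatrix id e).det ≠ 0 ∧
      y ∈ diagonalZeros A 4 ℤ_[p] ∧ ∀ i, y (e i) ≠ 0 := by
  obtain ⟨hsol, hrank⟩ := hx
  obtain ⟨e, he⟩ := exists_det_submatrix_ne_zero_of_rank_eq hrank
  have hcols : (Matrix.of fun i j => (A i j : ℚ_[p]) * x j ^ 3).submatrix id e =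
      Matrix.of fun i j => x (e j) ^ 3 * (A.submatrix id e).map (Int.cast : ℤ → ℚ_[p]) i j := by
    ext i j
    simp [mul_comm]
  rw [hcols, Matrix.det_mul_row, ← Int.cast_det, mul_ne_zero_iff, Finset.prod_ne_zero_iff] at he
  obtain ⟨b, hb⟩ := IsLocalization.exist_integer_multiples_of_finite (nonZeroDivisors ℤ_[p]) x
  choose y hy using hb
  have hb₀ : ((b : ℤ_[p]) : ℚ_[p]) ≠ 0 := by simp
  have hyx (j : Fin s) : ((y j : ℤ_[p]) : ℚ_[p]) = (b : ℤ_[p]) * x j :=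
    (hy j).trans (Algebra.smul_def _ _)
  refine ⟨e, y, fun h => he.2 (by simp [h]), ?_, fun i hi => ?_⟩
  · refine funext fun i => Subtype.val_injective ?_
    have hscale (j : Fin s) : (A i j : ℚ_[p]) * (y j : ℚ_[p]) ^ 4 =
        ((b : ℤ_[p]) : ℚ_[p]) ^ 4 * ((A i j : ℚ_[p]) * x j ^ 4) := by
      rw [hyx]
      ring
    simp [Matrix.mulVec, dotProduct, hscale, ← Finset.mul_sum, hsol i]
  · have := hyx (e i)
    rw [hi, PadicInt.coe_zero, eq_comm, mul_eq_zero, or_iff_right hb₀] at this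
    exact he.1 i (Finset.mem_univ i) (by simp [this])

open scoped ComplexOrder

lemma NonsingularSol.exists_le_solutionDensity {x : Fin s → ℚ_[p]} (hx : NonsingularSol A x) :
    ∃ (m : ℕ) (c : ℂ), 0 < c ∧ ∀ h, c ≤ solutionDensity A (p ^ (m + h)) := by
  obtain ⟨e, y, hdet, hy, hye⟩ := hx.exists_mem_diagonalZeros
  obtain ⟨m, hm⟩ := exists_forall_pow_le_card_diagonalZeros hdet hy hye four_ne_zero
  obtain ⟨t, rfl⟩ : ∃ t, s = 3 + t := Nat.exists_eq_add_of_le (by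
    simpa using Fintype.card_le_of_injective e (injective_of_det_submatrix_ne_zero hdet))
  simp only [Fintype.card_fin, Nat.add_sub_cancel_left] at hm
  have hp : (0 : ℂ) < p := Nat.cast_pos.2 (Fact.out : p.Prime).pos
  refine ⟨m, (((p : ℂ) ^ m) ^ t)⁻¹, by positivity, fun h => ?_⟩
  have hcard : ((p : ℂ) ^ h) ^ t ≤ Nat.card (diagonalZeros A 4 (ZMod (p ^ (m + h)))) := by
    exact_mod_cast hm h
  rw [solutionDensity, ArithmeticFunction.coe_mk, Nat.cast_pow, pow_add ((p : ℂ) ^ (m + h)) 3 t,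
    mul_div_mul_left _ _ (by positivity)]
  calc (((p : ℂ) ^ m) ^ t)⁻¹ = ((p : ℂ) ^ h) ^ t / ((p : ℂ) ^ (m + h)) ^ t := by
        rw [pow_add, mul_pow]
        field_simp
    _ ≤ _ := by gcongr

lemma NonsingularSol.tsum_ABW_prime_pow_pos {x : Fin s → ℚ_[p]} (hx : NonsingularSol A x)
    (hsum : Summable fun h : ℕ => ABW A (p ^ h)) : 0 < ∑' h : ℕ, ABW A (p ^ h) := by
  obtain ⟨m, c, hc, hle⟩ := hx.exists_le_solutionDensity
  have hlim : Tendsto (fun h => ∑ i ∈ Finset.range (m + h + 1), ABW A (p ^ i)) atTop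
      (nhds (∑' h : ℕ, ABW A (p ^ h))) :=
    hsum.hasSum.tendsto_sum_nat.comp
      (tendsto_atTop_mono (fun h => show h ≤ m + h + 1 by lia) tendsto_id)
  refine hc.trans_le (ge_of_tendsto' hlim fun h => ?_)
  rw [sum_range_ABW_prime_pow A (Fact.out : p.Prime)]
  exact hle h

end LocalDensity

section EulerProduct

open scoped ComplexOrder

lemma summable_norm_tsum_prime_pow_succ {E : Type*} [NormedAddCommGroup E] [CompleteSpace E]
    {f : ℕ → E} (hf : Summable fun n => ‖f n‖) :
    Summable fun p : Nat.Primes => ‖∑' e : ℕ, f ((p : ℕ) ^ (e + 1))‖ := by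
  have hprimePow : Summable fun x : Nat.Primes × ℕ => ‖f ((x.1 : ℕ) ^ (x.2 + 1))‖ :=
    (hf.subtype {n | IsPrimePow n}).comp_injective Nat.Primes.prodNatEquiv.injective
  exact .of_nonneg_of_le (fun _ => norm_nonneg _)
    (fun p => norm_tsum_le_tsum_norm (hprimePow.prod_factor p)) hprimePow.prod

lemma tsum_pos_of_isMultiplicative {f : ArithmeticFunction ℂ} (hf : f.IsMultiplicative)
    (hsum : Summable fun n => ‖f n‖) (hpos : ∀ p : Nat.Primes, 0 < ∑' e : ℕ, f ((p : ℕ) ^ e)) :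
    0 < ∑' n, f n := by
  have hprod := hf.eulerProduct_hasProd hsum
  have hnonneg : 0 ≤ ∑' n, f n :=
    ge_of_tendsto' hprod fun F => Finset.prod_nonneg fun p _ => (hpos p).le
  have hfactor (p : Nat.Primes) :
      1 + ∑' e : ℕ, f ((p : ℕ) ^ (e + 1)) = ∑' e : ℕ, f ((p : ℕ) ^ e) := by
    have hp : Summable fun e : ℕ => f ((p : ℕ) ^ e) :=
      (hsum.comp_injective (Nat.pow_right_injective p.2.two_le)).of_norm
    rw [hp.tsum_eq_zero_add, pow_zero, hf.map_one]
  refine hnonneg.lt_of_ne' ?_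
  rw [← hprod.tprod_eq]
  simp only [← hfactor] at hpos ⊢
  exact tprod_one_add_ne_zero_of_summable (fun p => (hpos p).ne')
    (summable_norm_tsum_prime_pow_succ hsum)

end EulerProduct

section SeriesTail

variable {E : Type*} [NormedAddCommGroup E] {f : ℕ → E} {C : ℝ}

lemma summable_norm_of_le_div_sq (hf : ∀ n, ‖f n‖ ≤ C / (n : ℝ) ^ 2) :
    Summable fun n => ‖f n‖ :=
  .of_nonneg_of_le (fun _ => norm_nonneg _) hf <| by
    simpa only [div_eq_mul_inv] using (Real.summable_nat_pow_inv.2 one_lt_two).mul_left C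

lemma norm_sum_Ioc_le_of_le_div_sq (hC : 0 ≤ C) (hf : ∀ n, ‖f n‖ ≤ C / (n : ℝ) ^ 2) {N n : ℕ}
    (hN : N ≠ 0) (hn : N ≤ n) : ‖∑ i ∈ Finset.Ioc N n, f i‖ ≤ C / N :=
  calc ‖∑ i ∈ Finset.Ioc N n, f i‖
      ≤ ∑ i ∈ Finset.Ioc N n, C / (i : ℝ) ^ 2 := norm_sum_le_of_le _ fun i _ => hf i
    _ = C * ∑ i ∈ Finset.Ioc N n, ((i : ℝ) ^ 2)⁻¹ := by
        simp only [div_eq_mul_inv, Finset.mul_sum]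
    _ ≤ C * ((N : ℝ)⁻¹ - (n : ℝ)⁻¹) := by
        gcongr
        exact sum_Ioc_inv_sq_le_sub hN hn
    _ ≤ C / N := by
        rw [div_eq_mul_inv]
        gcongr
        exact sub_le_self _ (by positivity)

lemma norm_sub_sum_Icc_floor_le {S : E} (hC : 0 ≤ C) (hf : ∀ n, ‖f n‖ ≤ C / (n : ℝ) ^ 2)
    (hS : Tendsto (fun N => ∑ n ∈ Finset.Icc 1 N, f n) atTop (nhds S)) {X : ℝ} (hX : 1 ≤ X) :
    ‖S - ∑ n ∈ Finset.Icc 1 ⌊X⌋₊, f n‖ ≤ 2 * C / X := by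
  have hN : 1 ≤ ⌊X⌋₊ := Nat.le_floor (by simpa using hX)
  have hfloor : X ≤ 2 * ⌊X⌋₊ := by
    have : (1 : ℝ) ≤ ⌊X⌋₊ := Nat.one_le_cast.2 hN
    linarith [Nat.lt_floor_add_one X]
  have htail : ‖S - ∑ n ∈ Finset.Icc 1 ⌊X⌋₊, f n‖ ≤ C / ⌊X⌋₊ := by
    refine le_of_tendsto (hS.sub_const _).norm ?_
    filter_upwards [eventually_ge_atTop ⌊X⌋₊] with n hn
    have hsplit : ∑ i ∈ Finset.Icc 1 n, f i =
        ∑ i ∈ Finset.Icc 1 ⌊X⌋₊, f i + ∑ i ∈ Finset.Ioc ⌊X⌋₊ n, f i :=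
      (Finset.sum_Ioc_consecutive f (Nat.zero_le _) hn).symm
    rw [hsplit, add_sub_cancel_left]
    exact norm_sum_Ioc_le_of_le_div_sq hC hf (Nat.one_le_iff_ne_zero.1 hN) hn
  refine htail.trans ?_
  rw [div_le_div_iff₀ (by positivity) (by positivity)]
  nlinarith

lemma tendsto_sum_Icc_one {S : E} (hf : HasSum f S) (h₀ : f 0 = 0) :
    Tendsto (fun N => ∑ n ∈ Finset.Icc 1 N, f n) atTop (nhds S) := by
  refine (hf.tendsto_sum_nat.comp (tendsto_add_atTop_nat 1)).congr fun N => ?_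
  rw [Function.comp_apply, Finset.sum_range_succ', h₀, add_zero, Finset.range_eq_Ico,
    Finset.sum_Ico_add' f 0 N 1, zero_add, Finset.Ico_add_one_right_eq_Icc]

end SeriesTail

lemma tsum_ABW_pos {s : ℕ} {A : Matrix (Fin 3) (Fin s) ℤ} (hsum : Summable fun q : ℕ => ‖ABW A q‖)
    (hA : ∀ (p : ℕ) [Fact p.Prime], ∃ x : Fin s → ℚ_[p], NonsingularSol A x) :
    (∑' q, ABW A q).im = 0 ∧ 0 < (∑' q, ABW A q).re := by
  have hpos := tsum_pos_of_isMultiplicative (isMultiplicative_singularSeriesTerm A) hsum fun p => by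
    have : Fact (p : ℕ).Prime := ⟨p.2⟩
    obtain ⟨x, hx⟩ := hA p
    exact hx.tsum_ABW_prime_pow_pos
      (hsum.comp_injective (Nat.pow_right_injective p.2.two_le)).of_norm
  obtain ⟨hre, him⟩ := Complex.pos_iff.1 hpos
  exact ⟨him.symm, hre⟩

theorem stmt14 {s : ℕ} (hs : 32 ≤ s) (A : Matrix (Fin 3) (Fin s) ℤ)
    (hA : Propitious A) :
    (∀ ε > (0 : ℝ), ∃ C > (0 : ℝ), ∀ q : ℕ, 1 ≤ q →
      ‖ABW A q‖ ≤ C * (q : ℝ) ^ (ε - 5 / 3)) ∧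
    Summable (fun q : ℕ => ‖ABW A q‖) ∧
    ∃ S : ℂ,
      Tendsto (fun N : ℕ => ∑ q ∈ Finset.Icc 1 N, ABW A q) atTop (nhds S) ∧
      (∃ C' > (0 : ℝ), ∀ X : ℝ, 1 ≤ X →
        ‖S - ∑ q ∈ Finset.Icc 1 ⌊X⌋₊, ABW A q‖ ≤ C' * X ^ (-(1 : ℝ) / 2)) ∧
      ((∀ (p : ℕ) [Fact p.Prime], ∃ x : Fin s → ℚ_[p], NonsingularSol A x) →
        S.im = 0 ∧ 0 < S.re) := by
  obtain ⟨C, hC, hbound⟩ := hA.exists_norm_ABW_le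
  have hsum := summable_norm_of_le_div_sq hbound
  have hlim := tendsto_sum_Icc_one hsum.of_norm.hasSum (singularSeriesTerm A).map_zero
  refine ⟨fun ε hε => ⟨C, hC, fun q hq => (hbound q).trans ?_⟩, hsum, _, hlim,
    ⟨2 * C, by positivity, fun X hX => ?_⟩, tsum_ABW_pos hsum⟩
  · rw [div_eq_mul_inv, ← Real.rpow_natCast, ← Real.rpow_neg (by positivity)]
    have : (1 : ℝ) ≤ q := Nat.one_le_cast.2 hq
    gcongr
    push_cast
    linarith
  · refine (norm_sub_sum_Icc_floor_le hC.le hbound hlim hX).trans ?_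
    rw [div_eq_mul_inv, ← Real.rpow_neg_one]
    gcongr
    norm_num
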